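/- Let s ≥ 0, f ∈ H^s(𝕊) with f_φ ∈ H^{(s−1/2)_+}(𝕊), and h ∈ H^{s+3/4}(ℰ). Then the function v defined on the closed exterior of 𝕊 by v(r,θ,φ) = Σ_{l=0}^∞ Σ_{m=−l}^{l} (b_l^m + c_l^m) r^{−l−1} Y_l^m(θ,φ) has trace v|_𝕊 ∈ H^{s+1}(𝕊) and satisfies ‖v‖_{H^{s+1}(𝕊)} ≤ C (‖f‖_{H^s(𝕊)} + ‖f_φ‖_{H^{(s−1/2)_+}(𝕊)} + ‖h‖_{H^{s+3/4}(ℰ)}) for some constant C > 0 independent of f and h. Here a_+ = max{a, 0}. -/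

import Mathlib

noncomputable section

open MeasureTheory Real Filter

/-- The Legendre polynomial of degree `n`, via Rodrigues' formula. -/
def legendreP (n : ℕ) : Polynomial ℝ :=
  Polynomial.C ((2 ^ n * n.factorial : ℝ)⁻¹) *
    Polynomial.derivative^[n] ((Polynomial.X ^ 2 - 1) ^ n)

/-- The associated Legendre function `P_l^m` (with Condon–Shortley phase),
so that `P_{|m|+2k}^{|m|}(0) = (-1)^{|m|+k} (2|m|+2k-1)!!/(2k)!!`. -/
def assocLegendre (l m : ℕ) (x : ℝ) : ℝ :=
  (-1 : ℝ) ^ m * (1 - x ^ 2) ^ ((m : ℝ) / 2) *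
    (Polynomial.derivative^[m] (legendreP l)).eval x

/-- The normalizing constant `α_l^m` of the spherical harmonics. -/
def alphaY (l : ℕ) (m : ℤ) : ℝ :=
  (-1 : ℝ) ^ ((m + |m|) / 2) *
    Real.sqrt ((2 * l + 1) * (l - m.natAbs).factorial /
      (4 * Real.pi * (l + m.natAbs).factorial))

/-- The spherical harmonic `Y_l^m` in latitude/longitude coordinates `(θ, φ)`. -/
def Ylm (l : ℕ) (m : ℤ) (θ φ : ℝ) : ℂ :=
  ((alphaY l m * assocLegendre l m.natAbs (Real.sin θ) : ℝ) : ℂ) *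
    Complex.exp (Complex.I * m * φ)

/-- The surface measure `dS = cos θ dθ dφ` of the unit sphere, in the coordinate box
`[-π/2, π/2] × [-π, π)`. -/
def sphereMeasure : Measure (ℝ × ℝ) :=
  ((volume : Measure (ℝ × ℝ)).restrict
      (Set.Icc (-(Real.pi / 2)) (Real.pi / 2) ×ˢ Set.Ico (-Real.pi) Real.pi)).withDensity
    fun p => ENNReal.ofReal (Real.cos p.1)

/-- The Fourier–Laplace coefficient `ψ̂_l^m = ∫_𝕊 ψ conj(Y_l^m) dS`. -/
def flCoeff (ψ : ℝ → ℝ → ℂ) (l : ℕ) (m : ℤ) : ℂ :=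
  ∫ p : ℝ × ℝ, ψ p.1 p.2 * (starRingEnd ℂ) (Ylm l m p.1 p.2) ∂sphereMeasure

/-- Membership in the fractional Sobolev space `H^s(𝕊)`:
`ψ ∈ L²(𝕊)` and `Σ_{l,m} (l+1)^{2s} |ψ̂_l^m|² < ∞`.
(The coefficients with `|m| > l` vanish automatically.) -/
def MemHs (s : ℝ) (ψ : ℝ → ℝ → ℂ) : Prop :=
  MeasureTheory.MemLp (fun p : ℝ × ℝ => ψ p.1 p.2) 2 sphereMeasure ∧
    Summable fun p : ℕ × ℤ =>
      ((p.1 : ℝ) + 1) ^ (2 * s) * ‖flCoeff ψ p.1 p.2‖ ^ 2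

/-- The `H^s(𝕊)` norm. -/
def HsNorm (s : ℝ) (ψ : ℝ → ℝ → ℂ) : ℝ :=
  Real.sqrt (∑' p : ℕ × ℤ, ((p.1 : ℝ) + 1) ^ (2 * s) * ‖flCoeff ψ p.1 p.2‖ ^ 2)

/-- Axially symmetric functions on the sphere: functions not depending on the longitude. -/
def Axial (ψ : ℝ → ℝ → ℂ) : Prop := ∀ θ φ₁ φ₂, ψ θ φ₁ = ψ θ φ₂

/-- Spherical (latitude/longitude) coordinates on the unit sphere of `ℝ³`. -/
def sphCoord (θ φ : ℝ) : EuclideanSpace ℝ (Fin 3) :=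
  (WithLp.equiv 2 (Fin 3 → ℝ)).symm
    ![Real.cos θ * Real.cos φ, Real.cos θ * Real.sin φ, Real.sin θ]

/-- The open exterior `Ω` of the unit sphere. -/
def extDomain : Set (EuclideanSpace ℝ (Fin 3)) := {x | 1 < ‖x‖}

/-- The closed exterior `cl Ω` of the unit sphere. -/
def closedExt : Set (EuclideanSpace ℝ (Fin 3)) := {x | 1 ≤ ‖x‖}

/-- The Laplacian of a function on `ℝ³`. -/
def lap {F : Type*} [NormedAddCommGroup F] [NormedSpace ℝ F]
    (u : EuclideanSpace ℝ (Fin 3) → F) (x : EuclideanSpace ℝ (Fin 3)) : F :=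
  ∑ i : Fin 3, fderiv ℝ (fun y => fderiv ℝ u y (EuclideanSpace.single i 1)) x
    (EuclideanSpace.single i 1)

/-- The radial derivative `u_r` at a point of the unit sphere (taken from outside). -/
def radialDeriv {F : Type*} [NormedAddCommGroup F] [NormedSpace ℝ F]
    (u : EuclideanSpace ℝ (Fin 3) → F) (θ φ : ℝ) : F :=
  derivWithin (fun r : ℝ => u (r • sphCoord θ φ)) (Set.Ici 1) 1

/-- The latitudinal derivative `u_θ` at a point of the unit sphere. -/
def thetaDeriv {F : Type*} [NormedAddCommGroup F] [NormedSpace ℝ F]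
    (u : EuclideanSpace ℝ (Fin 3) → F) (θ φ : ℝ) : F :=
  deriv (fun t => u (sphCoord t φ)) θ

/-- The boundary trace on the unit sphere of a real-valued function, in coordinates. -/
def traceR (u : EuclideanSpace ℝ (Fin 3) → ℝ) (θ φ : ℝ) : ℂ := (u (sphCoord θ φ) : ℂ)

/-- The boundary trace on the unit sphere of a complex-valued function, in coordinates. -/
def traceC (u : EuclideanSpace ℝ (Fin 3) → ℂ) (θ φ : ℝ) : ℂ := u (sphCoord θ φ)

/-- The Fourier coefficient on the equator `ℰ`. -/
def equatorCoeff (h : ℝ → ℂ) (m : ℤ) : ℂ :=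
  (1 / (2 * Real.pi)) * ∫ φ in (-Real.pi)..Real.pi, h φ * Complex.exp (-(Complex.I * m * φ))

/-- Membership in the fractional Sobolev space `H^s(ℰ)` on the equator. -/
def MemHsE (s : ℝ) (h : ℝ → ℂ) : Prop :=
  MeasureTheory.MemLp h 2 (volume.restrict (Set.Ico (-Real.pi) Real.pi)) ∧
    Summable fun m : ℤ => ((m.natAbs : ℝ) + 1) ^ (2 * s) * ‖equatorCoeff h m‖ ^ 2

/-- The `H^s(ℰ)` norm. -/
def HsNormE (s : ℝ) (h : ℝ → ℂ) : ℝ :=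
  Real.sqrt (∑' m : ℤ, ((m.natAbs : ℝ) + 1) ^ (2 * s) * ‖equatorCoeff h m‖ ^ 2)

/-- The constant `β_l^m`. -/
def betaLM (l : ℕ) (m : ℤ) : ℝ :=
  Real.sqrt (((l : ℝ) - m.natAbs) * ((l : ℝ) + m.natAbs) /
    ((2 * (l : ℝ) - 1) * (2 * (l : ℝ) + 1)))

/-- The constant `γ_l^m = -(l+1)β_l^m / (3(l+2)β_{l+1}^m)`. -/
def gammaLM (l : ℕ) (m : ℤ) : ℝ :=
  -(((l : ℝ) + 1) * betaLM l m) / (3 * ((l : ℝ) + 2) * betaLM (l + 1) m)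

/-- The product `Γ_k^m = ∏_{j=1}^k γ_{|m|+2j-1}^m` (with `Γ_0^m = 1`). -/
def GammaKM (m : ℤ) (k : ℕ) : ℝ :=
  ∏ j ∈ Finset.Icc 1 k, gammaLM (m.natAbs + 2 * j - 1) m

/-- The value `α_{|m|+2k}^m P_{|m|+2k}^{|m|}(0)`. -/
def PzeroM (m : ℤ) (k : ℕ) : ℝ :=
  alphaY (m.natAbs + 2 * k) m * assocLegendre (m.natAbs + 2 * k) m.natAbs 0

/-- The coefficient `a_l^m = f̂_l^m / (6(l+2)β_{l+1}^m)`. -/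
def aCoef (f : ℝ → ℝ → ℂ) (l : ℕ) (m : ℤ) : ℂ :=
  flCoeff f l m / ((6 * ((l : ℝ) + 2) * betaLM (l + 1) m : ℝ) : ℂ)

/-- The solution of the recurrence `b_{|m|-1}^m = b_{|m|}^m = 0`,
`b_{l+1}^m = γ_l^m b_{l-1}^m + a_l^m`; here `bSeq f m n = b_{|m|-1+n}^m`. -/
def bSeq (f : ℝ → ℝ → ℂ) (m : ℤ) : ℕ → ℂ
  | 0 => 0
  | 1 => 0
  | n + 2 => ((gammaLM (m.natAbs + n) m : ℝ) : ℂ) * bSeq f m n + aCoef f (m.natAbs + n) m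

/-- The coefficient `b_l^m`. -/
def bCoef (f : ℝ → ℝ → ℂ) (l : ℕ) (m : ℤ) : ℂ := bSeq f m (l + 1 - m.natAbs)

/-- The constant `ã^m`. -/
def aTilde (f : ℝ → ℝ → ℂ) (h : ℝ → ℂ) (m : ℤ) : ℂ :=
  (equatorCoeff h m - ∑' k : ℕ, bCoef f (m.natAbs + 2 * k) m * ((PzeroM m k : ℝ) : ℂ)) /
    (((∑' k : ℕ, GammaKM m k * PzeroM m k : ℝ)) : ℂ)

/-- The coefficient `c_l^m`: `c_{|m|+2k}^m = Γ_k^m ã^m` and `c_{|m|+2k-1}^m = 0`. -/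
def cCoef (f : ℝ → ℝ → ℂ) (h : ℝ → ℂ) (l : ℕ) (m : ℤ) : ℂ :=
  if m.natAbs ≤ l ∧ (l - m.natAbs) % 2 = 0 then
    ((GammaKM m ((l - m.natAbs) / 2) : ℝ) : ℂ) * aTilde f h m
  else 0

/-- The boundary trace `v(1, θ, φ)` of the formal series solution. -/
def vTraceS (f : ℝ → ℝ → ℂ) (h : ℝ → ℂ) (θ φ : ℝ) : ℂ :=
  ∑' p : ℕ × ℤ, (bCoef f p.1 p.2 + cCoef f h p.1 p.2) * Ylm p.1 p.2 θ φ

/-- The latitude of a point of `ℝ³`. -/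
def latitude (x : EuclideanSpace ℝ (Fin 3)) : ℝ := Real.arcsin (x 2 / ‖x‖)

/-- The longitude of a point of `ℝ³`. -/
def longitude (x : EuclideanSpace ℝ (Fin 3)) : ℝ :=
  Complex.arg ((x 0 : ℂ) + (x 1 : ℂ) * Complex.I)

/-- The formal series solution `v = Σ (b_l^m + c_l^m) r^{-l-1} Y_l^m(θ, φ)`. -/
def vFun (f : ℝ → ℝ → ℂ) (h : ℝ → ℂ) (x : EuclideanSpace ℝ (Fin 3)) : ℂ :=
  ∑' p : ℕ × ℤ, (bCoef f p.1 p.2 + cCoef f h p.1 p.2) * ((‖x‖ : ℂ) ^ (-(p.1 : ℤ) - 1)) *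
    Ylm p.1 p.2 (latitude x) (longitude x)

/-- `v` is a classical solution of the linearized (oblique derivative) problem
`Δv = 0` in `Ω`, `∇d⋅∇v = -2 sin θ v_r + cos θ v_θ = f/2` on `𝕊`, `v → 0` at infinity,
`v = h` on the equator; complex-valued version. -/
def SolvesObliqueC (v : EuclideanSpace ℝ (Fin 3) → ℂ) (f : ℝ → ℝ → ℂ) (h : ℝ → ℂ) : Prop :=
  ContDiffOn ℝ 2 v extDomain ∧ ContDiffOn ℝ 1 v closedExt ∧
    (∀ x ∈ extDomain, lap v x = 0) ∧
    (∀ θ ∈ Set.Icc (-(Real.pi / 2)) (Real.pi / 2), ∀ φ : ℝ,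
      -2 * (Real.sin θ : ℂ) * radialDeriv v θ φ + (Real.cos θ : ℂ) * thetaDeriv v θ φ
        = f θ φ / 2) ∧
    Filter.Tendsto v (Bornology.cobounded _) (nhds 0) ∧
    (∀ φ : ℝ, v (sphCoord 0 φ) = h φ)

/-- Real-valued version of `SolvesObliqueC`. -/
def SolvesObliqueR (v : EuclideanSpace ℝ (Fin 3) → ℝ) (f : ℝ → ℝ → ℝ) (h : ℝ → ℝ) : Prop :=
  ContDiffOn ℝ 2 v extDomain ∧ ContDiffOn ℝ 1 v closedExt ∧
    (∀ x ∈ extDomain, lap v x = 0) ∧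
    (∀ θ ∈ Set.Icc (-(Real.pi / 2)) (Real.pi / 2), ∀ φ : ℝ,
      -2 * Real.sin θ * radialDeriv v θ φ + Real.cos θ * thetaDeriv v θ φ = f θ φ / 2) ∧
    Filter.Tendsto v (Bornology.cobounded _) (nhds 0) ∧
    (∀ φ : ℝ, v (sphCoord 0 φ) = h φ)

/-!
The numbers `γ_l^m` satisfy `|γ_l^m| ≤ 1/3`, so in each order `m` the recurrence for `b_l^m` is a
contraction and `b_l^m` is a geometrically damped combination of the `a_j^m`, `j < l`, while
`c_l^m` decays geometrically away from `l = |m|`. Because the factors `γ` and the ratios of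
consecutive equatorial values `P_{|m|+2k}^{|m|}(0)` are negative, the terms of the denominator of
`ã^m` all have the same sign; hence its modulus is at least that of its first term, which is of
size `(|m| + 1)^{1/4}`. This yields an estimate of the weighted `ℓ²` norm of `b + c` in which
`|f̂_l^m|` carries the factor `1 / ((l + 1) β_{l+1}^m)`, and the loss in `β` near `l = |m|` costs
half a power of `|m|`. Since `f_φ` has coefficients `i m f̂_l^m`, that half power is paid for by
`‖f_φ‖_{H^{(s-1/2)₊}}`. Orthonormality of the `Y_l^m` identifies `b_l^m + c_l^m` with the
Fourier–Laplace coefficients of the trace.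
-/

open scoped ENNReal NNReal

section Series

lemma add_sq_le_two_mul_add_sq (x y : ℝ≥0∞) : (x + y) ^ 2 ≤ 2 * (x ^ 2 + y ^ 2) := by
  have h := ENNReal.rpow_add_le_mul_rpow_add_rpow x y one_le_two
  norm_num at h
  exact h

lemma tsum_mul_sq_le_tsum_sq_mul_tsum_sq {ι : Type*} (u v : ι → ℝ≥0∞) :
    (∑' i, u i * v i) ^ 2 ≤ (∑' i, u i ^ 2) * ∑' i, v i ^ 2 := by
  let : MeasurableSpace ι := ⊤
  have holder := ENNReal.lintegral_mul_le_Lp_mul_Lq (Measure.count : Measure ι)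
    Real.HolderConjugate.two_two measurable_from_top.aemeasurable
    measurable_from_top.aemeasurable (f := u) (g := v)
  simp only [lintegral_count, Pi.mul_apply] at holder
  refine (pow_le_pow_left' holder 2).trans_eq ?_
  rw [mul_pow, ← ENNReal.rpow_mul_natCast, ← ENNReal.rpow_mul_natCast]
  norm_num

lemma le_inv_add_mul_sq {w : ℝ≥0∞} (x : ℝ≥0∞) (hw : w ≠ 0) (hw' : w ≠ ⊤) :
    x ≤ w⁻¹ + w * x ^ 2 := by
  rcases le_total x w⁻¹ with h | h
  · exact h.trans le_self_add
  · calc x = w * w⁻¹ * x := by rw [ENNReal.mul_inv_cancel hw hw', one_mul]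
      _ ≤ w * x * x := by gcongr
      _ = w * x ^ 2 := by rw [sq, mul_assoc]
      _ ≤ w⁻¹ + w * x ^ 2 := le_add_self

lemma ofReal_mul_norm_sq {E : Type*} [SeminormedAddGroup E] {w : ℝ} (hw : 0 ≤ w) (z : E) :
    ENNReal.ofReal (w * ‖z‖ ^ 2) = ENNReal.ofReal w * ‖z‖ₑ ^ 2 := by
  rw [ENNReal.ofReal_mul hw, ENNReal.ofReal_pow (norm_nonneg z), ofReal_norm]

lemma tsum_ofReal_eq_ofReal_sqrt_tsum_sq {ι : Type*} {F : ι → ℝ} (hF : ∀ i, 0 ≤ F i)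
    (hsum : Summable F) :
    ∑' i, ENNReal.ofReal (F i) = ENNReal.ofReal (√(∑' i, F i) ^ 2) := by
  rw [Real.sq_sqrt (tsum_nonneg hF), ENNReal.ofReal_tsum_of_nonneg hF hsum]

lemma summable_and_tsum_le_of_tsum_ofReal_le {ι : Type*} {F : ι → ℝ} (hF : ∀ i, 0 ≤ F i) {B : ℝ}
    (hB : 0 ≤ B) (h : ∑' i, ENNReal.ofReal (F i) ≤ ENNReal.ofReal B) :
    Summable F ∧ ∑' i, F i ≤ B := by
  have hsum : Summable F := by
    simpa [ENNReal.toReal_ofReal (hF _)] using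
      ENNReal.summable_toReal (ne_top_of_le_ne_top ENNReal.ofReal_ne_top h)
  rw [← ENNReal.ofReal_tsum_of_nonneg hF hsum, ENNReal.ofReal_le_ofReal_iff hB] at h
  exact ⟨hsum, h⟩

lemma tsum_nat_prod_int_eq {G : ℕ × ℤ → ℝ≥0∞} (hG : ∀ l m, l < m.natAbs → G (l, m) = 0) :
    ∑' p, G p = ∑' (m : ℤ) (n : ℕ), G (m.natAbs + n, m) := by
  rw [ENNReal.summable.tsum_prod' fun _ => ENNReal.summable, ENNReal.tsum_comm]
  congr 1 with m
  refine ((add_right_injective m.natAbs).tsum_eq fun l hl => ?_).symm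
  exact ⟨l - m.natAbs, Nat.add_sub_of_le (not_lt.mp fun h => hl (hG l m h))⟩

lemma tsum_geometric_mul_rpow_ne_top {q : ℝ} (hq0 : 0 < q) (hq1 : q < 1) {c : ℝ} (hc : 0 ≤ c)
    (p : ℝ) :
    ∑' j : ℕ, ENNReal.ofReal q ^ j * ENNReal.ofReal ((c * (j + 1)) ^ p) ≠ ⊤ := by
  obtain ⟨k, hk⟩ := exists_nat_ge p
  have poly_geometric : Summable fun j : ℕ => ((j + 1 : ℕ) : ℝ) ^ k * q ^ (j + 1) :=
    (summable_nat_add_iff (f := fun j : ℕ => (j : ℝ) ^ k * q ^ j) 1).mpr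
      (summable_pow_mul_geometric_of_norm_lt_one k (by rwa [Real.norm_of_nonneg hq0.le]))
  have hsum : Summable fun j : ℕ => q ^ j * (c * (j + 1)) ^ p := by
    refine (poly_geometric.mul_left (c ^ p / q)).of_nonneg_of_le (fun j => by positivity)
      fun j => ?_
    calc q ^ j * (c * (j + 1)) ^ p = q ^ j * (c ^ p * ((j : ℝ) + 1) ^ p) := by
          rw [Real.mul_rpow hc (by positivity)]
      _ ≤ q ^ j * (c ^ p * ((j : ℝ) + 1) ^ (k : ℝ)) := by gcongr; simp
      _ = c ^ p / q * (((j + 1 : ℕ) : ℝ) ^ k * q ^ (j + 1)) := by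
          rw [Real.rpow_natCast]
          push_cast
          field_simp
          ring
  simpa only [ENNReal.ofReal_mul (pow_nonneg hq0.le _), ENNReal.ofReal_pow hq0.le] using
    hsum.tsum_ofReal_ne_top

lemma summable_natCast_add_one_rpow {p : ℝ} (hp : p < -1) :
    Summable fun n : ℕ => ((n : ℝ) + 1) ^ p := by
  simpa using (summable_nat_add_iff 1).mpr (Real.summable_nat_rpow.mpr hp)

lemma summable_natAbs_add_one_rpow {p : ℝ} (hp : p < -1) :
    Summable fun m : ℤ => ((m.natAbs : ℝ) + 1) ^ p := by
  apply Summable.of_nat_of_neg <;> simpa using summable_natCast_add_one_rpow hp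

section TwoStepRecurrence

variable {q : ℝ≥0∞} {x y : ℕ → ℝ≥0∞}

lemma le_tsum_of_two_step_recurrence (hx0 : x 0 = 0) (hx1 : x 1 = 0)
    (hx : ∀ n, x (n + 2) ≤ q * x n + y n) (n : ℕ) :
    x n ≤ ∑' (j : ℕ) (i : ℕ), if n = i + 2 + 2 * j then q ^ j * y i else 0 := by
  induction n using Nat.twoStepInduction with
  | zero => simp [hx0]
  | one => simp [hx1]
  | more n ih _ =>
    have first_term : y n ≤ ∑' i : ℕ, if n + 2 = i + 2 + 2 * 0 then q ^ 0 * y i else 0 :=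
      le_trans (by simp) (ENNReal.le_tsum n)
    have remaining_terms : q * x n ≤
        ∑' (j : ℕ) (i : ℕ), if n + 2 = i + 2 + 2 * (j + 1) then q ^ (j + 1) * y i else 0 := by
      calc q * x n
          ≤ q * ∑' (j : ℕ) (i : ℕ), if n = i + 2 + 2 * j then q ^ j * y i else 0 := by gcongr
        _ = _ := by
            simp_rw [← ENNReal.tsum_mul_left, mul_ite, mul_zero, ← mul_assoc, ← pow_succ',
              show ∀ i j : ℕ, n + 2 = i + 2 + 2 * (j + 1) ↔ n = i + 2 + 2 * j by omega]
    rw [tsum_eq_zero_add' ENNReal.summable]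
    exact (hx n).trans ((add_comm _ _).trans_le (add_le_add first_term remaining_terms))

lemma tsum_mul_le_of_two_step_recurrence {w w' r : ℕ → ℝ≥0∞} (hx0 : x 0 = 0) (hx1 : x 1 = 0)
    (hx : ∀ n, x (n + 2) ≤ q * x n + y n) (hw : ∀ i j, w (i + 2 + 2 * j) ≤ r j * w' i) :
    ∑' n, w n * x n ≤ (∑' j, q ^ j * r j) * ∑' i, w' i * y i := by
  calc ∑' n, w n * x n
      ≤ ∑' n, w n * ∑' (j : ℕ) (i : ℕ), if n = i + 2 + 2 * j then q ^ j * y i else 0 := by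
        gcongr with n
        exact le_tsum_of_two_step_recurrence hx0 hx1 hx n
    _ = ∑' (n : ℕ) (j : ℕ) (i : ℕ), if n = i + 2 + 2 * j then w n * (q ^ j * y i) else 0 := by
        simp_rw [← ENNReal.tsum_mul_left, mul_ite, mul_zero]
    _ = ∑' (j : ℕ) (i : ℕ), w (i + 2 + 2 * j) * (q ^ j * y i) := by
        rw [ENNReal.tsum_comm]
        congr 1 with j
        rw [ENNReal.tsum_comm]
        simp_rw [tsum_ite_eq]
    _ ≤ ∑' (j : ℕ) (i : ℕ), (q ^ j * r j) * (w' i * y i) := by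
        refine ENNReal.tsum_le_tsum fun j => ENNReal.tsum_le_tsum fun i => ?_
        calc _ ≤ r j * w' i * (q ^ j * y i) := by gcongr; exact hw i j
          _ = _ := by ring
    _ = _ := by simp_rw [ENNReal.tsum_mul_left, ENNReal.tsum_mul_right]

end TwoStepRecurrence

end Series

section RecurrenceCoefficients

variable (m : ℤ) (n : ℕ)

lemma betaLM_nonneg (l : ℕ) : 0 ≤ betaLM l m := Real.sqrt_nonneg _

lemma betaLM_natAbs_self : betaLM m.natAbs m = 0 := by simp [betaLM]

lemma betaLM_natAbs_add_succ_sq : betaLM (m.natAbs + n + 1) m ^ 2 =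
    (n + 1) * (2 * m.natAbs + n + 1) /
      ((2 * (m.natAbs + n) + 1) * (2 * (m.natAbs + n) + 3)) := by
  have arg_eq : ((m.natAbs + n + 1 : ℕ) - m.natAbs : ℝ) * ((m.natAbs + n + 1 : ℕ) + m.natAbs) /
      ((2 * (m.natAbs + n + 1 : ℕ) - 1) * (2 * (m.natAbs + n + 1 : ℕ) + 1)) =
      (n + 1) * (2 * m.natAbs + n + 1) /
        ((2 * (m.natAbs + n) + 1) * (2 * (m.natAbs + n) + 3)) := by
    push_cast
    ring
  rw [betaLM, arg_eq, Real.sq_sqrt (by positivity)]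

lemma div_le_betaLM_sq :
    ((n : ℝ) + 1) / (4 * (m.natAbs + n + 1)) ≤ betaLM (m.natAbs + n + 1) m ^ 2 := by
  rw [betaLM_natAbs_add_succ_sq, div_le_div_iff₀ (by positivity) (by positivity), mul_assoc]
  refine mul_le_mul_of_nonneg_left ?_ (by positivity)
  have : 0 ≤ (m.natAbs : ℝ) * (m.natAbs + n + 1) := by positivity
  linarith

lemma betaLM_pos : 0 < betaLM (m.natAbs + n + 1) m :=
  (sq_pos_iff.mp ((by positivity : (0 : ℝ) < _).trans_le (div_le_betaLM_sq m n))).lt_of_le'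
    (betaLM_nonneg m _)

lemma gammaLM_nonpos : gammaLM (m.natAbs + n) m ≤ 0 := by
  have := betaLM_pos m n
  have := betaLM_nonneg m (m.natAbs + n)
  rw [gammaLM, neg_div, neg_nonpos]
  positivity

lemma add_one_mul_betaLM_le :
    (m.natAbs + n + 1) * betaLM (m.natAbs + n) m ≤
      (m.natAbs + n + 2) * betaLM (m.natAbs + n + 1) m := by
  obtain _ | n := n
  · simpa [betaLM_natAbs_self] using mul_nonneg (by positivity) (betaLM_nonneg m _)
  have := betaLM_nonneg m (m.natAbs + (n + 1) + 1)
  refine le_of_sq_le_sq ?_ (by positivity)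
  rw [mul_pow, mul_pow, betaLM_natAbs_add_succ_sq, ← add_assoc m.natAbs n 1,
    betaLM_natAbs_add_succ_sq, mul_div_assoc', mul_div_assoc',
    div_le_div_iff₀ (by positivity) (by positivity), ← sub_nonneg]
  push_cast
  ring_nf
  positivity

lemma abs_gammaLM_le : |gammaLM (m.natAbs + n) m| ≤ 1 / 3 := by
  have := betaLM_pos m n
  have := betaLM_nonneg m (m.natAbs + n)
  rw [gammaLM, neg_div, abs_neg, abs_of_nonneg (by positivity),
    div_le_div_iff₀ (by positivity) (by norm_num)]
  push_cast
  linarith [add_one_mul_betaLM_le m n]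

lemma norm_aCoef_sq_mul_le (f : ℝ → ℝ → ℂ) :
    ((m.natAbs + n + 1) * (n + 1)) * ‖aCoef f (m.natAbs + n) m‖ ^ 2 ≤
      ‖flCoeff f (m.natAbs + n) m‖ ^ 2 := by
  have := betaLM_pos m n
  have beta_bound : ((m.natAbs : ℝ) + n + 1) * (n + 1) ≤
      (6 * ((m.natAbs + n : ℕ) + 2) * betaLM (m.natAbs + n + 1) m) ^ 2 := by
    calc ((m.natAbs : ℝ) + n + 1) * (n + 1)
        = (2 * (m.natAbs + n + 1)) ^ 2 * ((n + 1) / (4 * (m.natAbs + n + 1))) := by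
          field_simp
          ring
      _ ≤ (6 * ((m.natAbs + n : ℕ) + 2)) ^ 2 * betaLM (m.natAbs + n + 1) m ^ 2 := by
          gcongr ?_ ^ 2 * ?_
          · push_cast
            linarith
          · exact div_le_betaLM_sq m n
      _ = _ := (mul_pow _ _ 2).symm
  rw [aCoef, norm_div, Complex.norm_real, div_pow, Real.norm_eq_abs, sq_abs, mul_div_assoc',
    div_le_iff₀ (by positivity), mul_comm]
  gcongr

lemma enorm_bSeq_add_two_le (f : ℝ → ℝ → ℂ) :
    ‖bSeq f m (n + 2)‖ₑ ≤ 3⁻¹ * ‖bSeq f m n‖ₑ + ‖aCoef f (m.natAbs + n) m‖ₑ := by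
  rw [bSeq]
  refine (enorm_add_le _ _).trans ?_
  rw [enorm_mul]
  gcongr
  rw [← ofReal_norm, Complex.norm_real, Real.norm_eq_abs]
  refine (ENNReal.ofReal_le_ofReal (abs_gammaLM_le m n)).trans_eq ?_
  rw [one_div, ENNReal.ofReal_inv_of_pos three_pos, ENNReal.ofReal_ofNat]

lemma bCoef_natAbs_add (f : ℝ → ℝ → ℂ) : bCoef f (m.natAbs + n) m = bSeq f m (n + 1) := by
  rw [bCoef, show m.natAbs + n + 1 - m.natAbs = n + 1 by omega]

lemma GammaKM_zero : GammaKM m 0 = 1 := by simp [GammaKM]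

lemma GammaKM_succ : GammaKM m (n + 1) = GammaKM m n * gammaLM (m.natAbs + (2 * n + 1)) m :=
  Finset.prod_Icc_succ_top (by omega) _

lemma neg_one_pow_mul_GammaKM_nonneg : 0 ≤ (-1) ^ n * GammaKM m n := by
  induction n with
  | zero => simp [GammaKM_zero]
  | succ n ih =>
    rw [GammaKM_succ, pow_succ]
    linarith [mul_nonneg ih (neg_nonneg.mpr (gammaLM_nonpos m (2 * n + 1)))]

lemma abs_GammaKM_le : |GammaKM m n| ≤ (1 / 3) ^ n := by
  induction n with
  | zero => simp [GammaKM_zero]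
  | succ n ih =>
    rw [GammaKM_succ, abs_mul, pow_succ]
    gcongr
    exact abs_gammaLM_le m _

end RecurrenceCoefficients

section EquatorValues

/-- The ratio `(2n choose n) / 4^n = (2n-1)!! / (2n)!!`, of order `n^(-1/2)`, in terms of which the
values of the spherical harmonics on the equator are expressed. -/
def centralBinomRatio (n : ℕ) : ℝ := n.centralBinom / 4 ^ n

lemma centralBinomRatio_zero : centralBinomRatio 0 = 1 := by simp [centralBinomRatio]

lemma centralBinomRatio_succ (n : ℕ) :
    centralBinomRatio (n + 1) = centralBinomRatio n * ((2 * n + 1) / (2 * n + 2)) := by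
  have h : ((n : ℝ) + 1) * (n + 1).centralBinom = 2 * (2 * n + 1) * n.centralBinom := by
    exact_mod_cast n.succ_mul_centralBinom_succ
  unfold centralBinomRatio
  field_simp
  linear_combination 2 * 4 ^ n * h

lemma centralBinomRatio_eq_factorial_div (n : ℕ) :
    centralBinomRatio n = (2 * n).factorial / ((2 ^ n) ^ 2 * (n.factorial : ℝ) ^ 2) := by
  rw [centralBinomRatio, Nat.centralBinom, Nat.cast_choose ℝ (by omega), ← pow_mul, mul_comm n 2,
    pow_mul, show 2 * n - n = n by omega]
  norm_num
  field_simp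

lemma centralBinomRatio_sq_mul_le_one (n : ℕ) : centralBinomRatio n ^ 2 * (n + 1) ≤ 1 := by
  induction n with
  | zero => simp [centralBinomRatio_zero]
  | succ n ih =>
    have step : ((2 * n + 1 : ℝ) / (2 * n + 2)) ^ 2 * (n + 1 + 1) ≤ n + 1 := by
      rw [div_pow, div_mul_eq_mul_div, div_le_iff₀ (by positivity)]
      nlinarith
    rw [centralBinomRatio_succ, mul_pow, mul_assoc]
    push_cast
    exact (mul_le_mul_of_nonneg_left step (sq_nonneg _)).trans ih

lemma one_le_centralBinomRatio_sq_mul (n : ℕ) : 1 ≤ centralBinomRatio n ^ 2 * (4 * n + 1) := by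
  induction n with
  | zero => simp [centralBinomRatio_zero]
  | succ n ih =>
    have step : (4 * n + 1 : ℝ) ≤ ((2 * n + 1) / (2 * n + 2)) ^ 2 * (4 * (n + 1) + 1) := by
      rw [div_pow, div_mul_eq_mul_div, le_div_iff₀ (by positivity)]
      nlinarith
    rw [centralBinomRatio_succ, mul_pow, mul_assoc]
    push_cast
    exact ih.trans (mul_le_mul_of_nonneg_left step (sq_nonneg _))

lemma coeff_X_sq_sub_one_pow (l j : ℕ) :
    ((Polynomial.X ^ 2 - 1 : Polynomial ℝ) ^ l).coeff (2 * j) = (-1) ^ (l - j) * l.choose j := by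
  have expand_eq : (Polynomial.X ^ 2 - 1 : Polynomial ℝ) ^ l =
      Polynomial.expand ℝ 2 ((Polynomial.X + Polynomial.C (-1)) ^ l) := by
    simp [sub_eq_add_neg]
  rw [expand_eq, mul_comm 2 j, Polynomial.coeff_expand_mul two_pos, Polynomial.coeff_X_add_C_pow]

lemma iterate_derivative_legendreP (l M : ℕ) : Polynomial.derivative^[M] (legendreP l) =
    Polynomial.C (2 ^ l * l.factorial : ℝ)⁻¹ *
      Polynomial.derivative^[M + l] ((Polynomial.X ^ 2 - 1) ^ l) := by
  rw [legendreP, Polynomial.iterate_derivative_C_mul, ← Function.iterate_add_apply]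

lemma assocLegendre_eval_zero (M k : ℕ) :
    assocLegendre (M + 2 * k) M 0 = (-1) ^ M * ((-1) ^ k *
      ((2 * (M + k)).factorial / (2 ^ (M + 2 * k) * (M + k).factorial * k.factorial))) := by
  rw [assocLegendre, iterate_derivative_legendreP, Polynomial.eval_mul, Polynomial.eval_C,
    ← Polynomial.coeff_zero_eq_eval_zero, Polynomial.coeff_iterate_derivative,
    show M + (M + 2 * k) = 2 * (M + k) by ring, zero_add, coeff_X_sq_sub_one_pow,
    Nat.descFactorial_self, Nat.cast_choose ℝ (by omega), show M + 2 * k - (M + k) = k by omega]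
  simp only [ne_eq, OfNat.ofNat_ne_zero, not_false_eq_true, zero_pow, sub_zero, Real.one_rpow,
    mul_one, nsmul_eq_mul]
  field_simp

lemma alphaY_sq (l : ℕ) (m : ℤ) : alphaY l m ^ 2 =
    (2 * l + 1) * (l - m.natAbs).factorial / (4 * π * (l + m.natAbs).factorial) := by
  rw [alphaY, mul_pow, Real.sq_sqrt (by positivity)]
  rcases Int.even_or_odd ((m + |m|) / 2) with h | h <;> simp [h.neg_one_zpow]

variable (m : ℤ) (k : ℕ)

lemma PzeroM_sq : PzeroM m k ^ 2 = (2 * (m.natAbs + 2 * k) + 1) / (4 * π) *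
    (centralBinomRatio k * centralBinomRatio (m.natAbs + k)) := by
  rw [PzeroM, mul_pow, alphaY_sq, assocLegendre_eval_zero]
  generalize m.natAbs = M
  rw [show M + 2 * k - M = 2 * k by omega, show M + 2 * k + M = 2 * (M + k) by ring, mul_pow,
    mul_pow, ← pow_mul, ← pow_mul, mul_comm M 2, mul_comm k 2, pow_mul, pow_mul,
    centralBinomRatio_eq_factorial_div, centralBinomRatio_eq_factorial_div]
  push_cast
  field_simp
  ring

lemma PzeroM_pow_four_le : PzeroM m k ^ 4 ≤ (m.natAbs + 2 * k + 2) / (2 * k + 2) := by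
  have ratio_k := centralBinomRatio_sq_mul_le_one k
  have ratio_Mk := centralBinomRatio_sq_mul_le_one (m.natAbs + k)
  rw [show PzeroM m k ^ 4 = (PzeroM m k ^ 2) ^ 2 by ring, PzeroM_sq, mul_pow, mul_pow]
  push_cast at ratio_Mk
  have hM : (0 : ℝ) ≤ m.natAbs := by positivity
  generalize (m.natAbs : ℝ) = M at *
  rw [← le_div_iff₀ (by positivity)] at ratio_k ratio_Mk
  calc ((2 * (M + 2 * k) + 1) / (4 * π)) ^ 2 *
        (centralBinomRatio k ^ 2 * centralBinomRatio (m.natAbs + k) ^ 2)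
      ≤ ((2 * (M + 2 * k) + 1) / (4 * 3)) ^ 2 * (1 / (k + 1) * (1 / (M + k + 1))) := by
        gcongr
        exact Real.pi_gt_three.le
    _ ≤ (M + 2 * k + 2) / (2 * k + 2) := by
        have numerator_le : (2 * (M + 2 * k) + 1) ^ 2 ≤ 8 * (M + 2 * k + 1) * (M + k + 1) := by
          nlinarith
        have : 0 ≤ (M + k + 1) * ((k : ℝ) + 1) * (M + 2 * k + 2) := by positivity
        rw [div_pow, div_mul_div_comm, div_mul_div_comm,
          div_le_div_iff₀ (by positivity) (by positivity)]
        calc _ ≤ 8 * (M + 2 * k + 2) * (M + k + 1) * (1 * 1) * (2 * k + 2) := by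
              gcongr
              exact numerator_le.trans (by gcongr; norm_num)
          _ ≤ (M + 2 * k + 2) * ((4 * 3) ^ 2 * ((k + 1) * (M + k + 1))) := by linarith

lemma abs_PzeroM_le : |PzeroM m k| ≤ ((m.natAbs + 2 * k + 2) / (2 * k + 2)) ^ (1 / 4 : ℝ) := by
  calc |PzeroM m k| = (|PzeroM m k| ^ 4) ^ ((4 : ℕ) : ℝ)⁻¹ :=
        (Real.pow_rpow_inv_natCast (abs_nonneg _) (by norm_num)).symm
    _ = (PzeroM m k ^ 4) ^ (1 / 4 : ℝ) := by
        rw [(by decide : Even 4).pow_abs]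
        norm_num
    _ ≤ _ := Real.rpow_le_rpow (by positivity) (PzeroM_pow_four_le m k) (by norm_num)

lemma natAbs_add_one_rpow_le : (m.natAbs + 1 : ℝ) ^ (1 / 4 : ℝ) ≤ 6 * |PzeroM m 0| := by
  have ratio_lower := one_le_centralBinomRatio_sq_mul m.natAbs
  have pow_four_lower : (m.natAbs : ℝ) + 1 ≤ (6 * |PzeroM m 0|) ^ 4 := by
    rw [mul_pow, (by decide : Even 4).pow_abs, show PzeroM m 0 ^ 4 = (PzeroM m 0 ^ 2) ^ 2 by ring,
      PzeroM_sq, centralBinomRatio_zero, mul_pow, mul_pow]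
    simp only [add_zero, Nat.cast_zero, mul_zero, one_pow, one_mul]
    have hM : (0 : ℝ) ≤ m.natAbs := by positivity
    generalize (m.natAbs : ℝ) = M at *
    rw [← div_le_iff₀ (by positivity)] at ratio_lower
    calc M + 1 ≤ 6 ^ 4 * (((2 * M + 1) / (4 * 4)) ^ 2 * (1 / (4 * M + 1))) := by
          rw [div_pow, div_mul_div_comm, mul_div_assoc', le_div_iff₀ (by positivity)]
          nlinarith
      _ ≤ _ := by
          gcongr
          exact Real.pi_lt_four.le
  calc (m.natAbs + 1 : ℝ) ^ (1 / 4 : ℝ) ≤ ((6 * |PzeroM m 0|) ^ 4) ^ (1 / 4 : ℝ) := by gcongr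
    _ = 6 * |PzeroM m 0| := by
        rw [one_div]
        exact Real.pow_rpow_inv_natCast (n := 4) (by positivity) (by norm_num)

lemma GammaKM_mul_PzeroM_mul_PzeroM_zero_nonneg :
    0 ≤ GammaKM m k * PzeroM m k * PzeroM m 0 := by
  rw [PzeroM, PzeroM, assocLegendre_eval_zero, assocLegendre_eval_zero, alphaY, alphaY]
  have pair_signs : ∀ g σ a τ ε b a' b' : ℝ, g * (σ * a * (τ * (ε * b))) * (σ * a' * (τ * b')) =
      σ ^ 2 * τ ^ 2 * (ε * g) * (a * b * a' * b') := by intros; ring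
  rw [pair_signs]
  exact mul_nonneg (mul_nonneg (by positivity) (neg_one_pow_mul_GammaKM_nonneg m k))
    (by positivity)

lemma summable_GammaKM_mul_PzeroM : Summable fun k => GammaKM m k * PzeroM m k := by
  refine .of_norm_bounded ((summable_geometric_of_lt_one (by norm_num)
    (by norm_num : (1 / 3 : ℝ) < 1)).mul_right ((m.natAbs + 1 : ℝ) ^ (1 / 4 : ℝ))) fun k => ?_
  rw [Real.norm_eq_abs, abs_mul]
  gcongr
  · exact abs_GammaKM_le m k
  · refine (abs_PzeroM_le m k).trans ?_
    gcongr
    rw [div_le_iff₀ (by positivity)]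
    nlinarith [mul_nonneg (Nat.cast_nonneg (α := ℝ) m.natAbs) (Nat.cast_nonneg (α := ℝ) k)]

lemma abs_PzeroM_zero_le_abs_tsum : |PzeroM m 0| ≤ |∑' k, GammaKM m k * PzeroM m k| := by
  -- All terms `Γ_k P_k` have the sign of `P_0`, so multiplying by `P_0` makes them nonnegative.
  rcases (abs_nonneg (PzeroM m 0)).eq_or_lt with h | hpos
  · exact h ▸ abs_nonneg _
  refine le_of_mul_le_mul_right ?_ hpos
  calc |PzeroM m 0| * |PzeroM m 0| = GammaKM m 0 * PzeroM m 0 * PzeroM m 0 := by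
        rw [abs_mul_abs_self, GammaKM_zero, one_mul]
    _ ≤ ∑' k, GammaKM m k * PzeroM m k * PzeroM m 0 :=
        ((summable_GammaKM_mul_PzeroM m).mul_right _).le_tsum 0
          fun k _ => GammaKM_mul_PzeroM_mul_PzeroM_zero_nonneg m k
    _ ≤ |∑' k, GammaKM m k * PzeroM m k| * |PzeroM m 0| := by
        rw [tsum_mul_right, ← abs_mul]
        exact le_abs_self _

end EquatorValues

section EquatorialConstant

variable (f : ℝ → ℝ → ℂ) (h : ℝ → ℂ) (m : ℤ)

lemma rpow_mul_norm_aCoef_le (n : ℕ) :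
    (m.natAbs + 1 : ℝ) ^ (1 / 4 : ℝ) * ((m.natAbs + n + 1) / (n + 1)) ^ (1 / 4 : ℝ) *
      ‖aCoef f (m.natAbs + n) m‖ ≤
    ‖flCoeff f (m.natAbs + n) m‖ * (n + 1 : ℝ) ^ (-(3 / 4) : ℝ) := by
  have sqrt_bound : (m.natAbs + n + 1 : ℝ) ^ (1 / 2 : ℝ) * (n + 1 : ℝ) ^ (1 / 2 : ℝ) *
      ‖aCoef f (m.natAbs + n) m‖ ≤ ‖flCoeff f (m.natAbs + n) m‖ := by
    rw [← Real.mul_rpow (by positivity) (by positivity), ← Real.sqrt_eq_rpow]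
    refine le_of_sq_le_sq ?_ (norm_nonneg _)
    rw [mul_pow, Real.sq_sqrt (by positivity)]
    exact norm_aCoef_sq_mul_le m n f
  refine le_trans ?_ (mul_le_mul_of_nonneg_right sqrt_bound (by positivity))
  rw [Real.div_rpow (by positivity) (by positivity), div_eq_mul_inv (_ ^ _) (_ ^ _),
    ← Real.rpow_neg (by positivity), mul_right_comm _ ‖aCoef f (m.natAbs + n) m‖]
  refine mul_le_mul_of_nonneg_right ?_ (norm_nonneg _)
  calc (m.natAbs + 1 : ℝ) ^ (1 / 4 : ℝ) *
        ((m.natAbs + n + 1 : ℝ) ^ (1 / 4 : ℝ) * (n + 1 : ℝ) ^ (-(1 / 4) : ℝ))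
      ≤ (m.natAbs + n + 1 : ℝ) ^ (1 / 4 : ℝ) *
        ((m.natAbs + n + 1 : ℝ) ^ (1 / 4 : ℝ) * (n + 1 : ℝ) ^ (-(1 / 4) : ℝ)) := by
        gcongr
        linarith [n.cast_nonneg (α := ℝ)]
    _ = (m.natAbs + n + 1 : ℝ) ^ (1 / 2 : ℝ) * (n + 1 : ℝ) ^ (1 / 2 : ℝ) *
        (n + 1 : ℝ) ^ (-(3 / 4) : ℝ) := by
        rw [← mul_assoc, ← Real.rpow_add (by positivity), mul_assoc,
          ← Real.rpow_add (by positivity)]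
        norm_num

lemma tsum_enorm_bCoef_mul_PzeroM_le :
    ∑' k : ℕ, ‖bCoef f (m.natAbs + 2 * k) m * (PzeroM m k : ℂ)‖ₑ ≤
      (∑' j : ℕ, (3⁻¹ : ℝ≥0∞) ^ j * 1) * ∑' i : ℕ,
        ENNReal.ofReal (((m.natAbs + i + 1) / (i + 1)) ^ (1 / 4 : ℝ)) *
          ‖aCoef f (m.natAbs + i) m‖ₑ := by
  let g : ℕ → ℝ≥0∞ := fun n => ENNReal.ofReal (((m.natAbs + n + 1) / (n + 1)) ^ (1 / 4 : ℝ))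
  have term_le (k : ℕ) : ‖bCoef f (m.natAbs + 2 * k) m * (PzeroM m k : ℂ)‖ₑ ≤
      g (2 * k + 1) * ‖bSeq f m (2 * k + 1)‖ₑ := by
    rw [enorm_mul, mul_comm, bCoef_natAbs_add]
    gcongr
    rw [← ofReal_norm, Complex.norm_real, Real.norm_eq_abs]
    refine ENNReal.ofReal_le_ofReal ((abs_PzeroM_le m k).trans_eq ?_)
    push_cast
    ring_nf
  have g_antitone (i j : ℕ) : g (i + 2 + 2 * j) ≤ 1 * g i := by
    rw [one_mul]
    refine ENNReal.ofReal_le_ofReal (Real.rpow_le_rpow (by positivity) ?_ (by norm_num))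
    rw [div_le_div_iff₀ (by positivity) (by positivity)]
    push_cast
    have : 0 ≤ (m.natAbs : ℝ) * (2 + 2 * j) := by positivity
    linarith
  calc ∑' k : ℕ, ‖bCoef f (m.natAbs + 2 * k) m * (PzeroM m k : ℂ)‖ₑ
      ≤ ∑' k : ℕ, g (2 * k + 1) * ‖bSeq f m (2 * k + 1)‖ₑ := ENNReal.tsum_le_tsum term_le
    _ ≤ ∑' n, g n * ‖bSeq f m n‖ₑ :=
        ENNReal.tsum_comp_le_tsum_of_injective (f := fun k : ℕ => 2 * k + 1)
          (fun a b hab => by simpa using hab) fun n => g n * ‖bSeq f m n‖ₑ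
    _ ≤ _ := tsum_mul_le_of_two_step_recurrence (by simp [bSeq]) (by simp [bSeq])
        (fun n => enorm_bSeq_add_two_le m n f) g_antitone

lemma exists_sq_tsum_enorm_bCoef_mul_PzeroM_le : ∃ K : ℝ≥0, ∀ (f : ℝ → ℝ → ℂ) (m : ℤ),
    (ENNReal.ofReal ((m.natAbs + 1 : ℝ) ^ (1 / 4 : ℝ)) *
      ∑' k : ℕ, ‖bCoef f (m.natAbs + 2 * k) m * (PzeroM m k : ℂ)‖ₑ) ^ 2 ≤
      K * ∑' n : ℕ, ‖flCoeff f (m.natAbs + n) m‖ₑ ^ 2 := by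
  set G : ℝ≥0∞ := ∑' j : ℕ, (3⁻¹ : ℝ≥0∞) ^ j * 1
  set Z : ℝ≥0∞ := ∑' n : ℕ, ENNReal.ofReal ((n + 1 : ℝ) ^ (-(3 / 2) : ℝ))
  have hG : G ≠ ⊤ := by
    simp only [G, mul_one, ENNReal.tsum_geometric, ne_eq, ENNReal.inv_eq_top, tsub_eq_zero_iff_le,
      not_le, ENNReal.inv_lt_one]
    norm_num
  have hZ : Z ≠ ⊤ := (summable_natCast_add_one_rpow (by norm_num)).tsum_ofReal_ne_top
  lift G ^ 2 * Z to ℝ≥0 using ENNReal.mul_ne_top (ENNReal.pow_ne_top hG) hZ with K hK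
  refine ⟨K, fun f m => ?_⟩
  have weighted_le (i : ℕ) : ENNReal.ofReal ((m.natAbs + 1 : ℝ) ^ (1 / 4 : ℝ)) *
      (ENNReal.ofReal (((m.natAbs + i + 1) / (i + 1)) ^ (1 / 4 : ℝ)) *
        ‖aCoef f (m.natAbs + i) m‖ₑ) ≤
      ‖flCoeff f (m.natAbs + i) m‖ₑ * ENNReal.ofReal ((i + 1 : ℝ) ^ (-(3 / 4) : ℝ)) := by
    rw [← ofReal_norm, ← ofReal_norm, ← ENNReal.ofReal_mul (by positivity),
      ← ENNReal.ofReal_mul (by positivity), ← ENNReal.ofReal_mul (by positivity), ← mul_assoc]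
    exact ENNReal.ofReal_le_ofReal (rpow_mul_norm_aCoef_le f m i)
  have square_weight (n : ℕ) : ENNReal.ofReal ((n + 1 : ℝ) ^ (-(3 / 4) : ℝ)) ^ 2 =
      ENNReal.ofReal ((n + 1 : ℝ) ^ (-(3 / 2) : ℝ)) := by
    rw [← ENNReal.ofReal_pow (by positivity), ← Real.rpow_mul_natCast (by positivity)]
    norm_num
  calc _ ≤ (G * ∑' i : ℕ, ‖flCoeff f (m.natAbs + i) m‖ₑ *
          ENNReal.ofReal ((i + 1 : ℝ) ^ (-(3 / 4) : ℝ))) ^ 2 := by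
        refine pow_le_pow_left' ?_ 2
        refine (mul_le_mul_right (tsum_enorm_bCoef_mul_PzeroM_le f m) _).trans ?_
        rw [mul_left_comm, ← ENNReal.tsum_mul_left]
        exact mul_le_mul_right (ENNReal.tsum_le_tsum weighted_le) _
    _ ≤ G ^ 2 * ((∑' n : ℕ, ‖flCoeff f (m.natAbs + n) m‖ₑ ^ 2) * Z) := by
        rw [mul_pow]
        refine mul_le_mul_right ((tsum_mul_sq_le_tsum_sq_mul_tsum_sq _ _).trans_eq ?_) _
        simp only [square_weight, Z]
    _ = K * ∑' n : ℕ, ‖flCoeff f (m.natAbs + n) m‖ₑ ^ 2 := by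
        rw [hK]
        ring

lemma rpow_mul_enorm_aTilde_le :
    ENNReal.ofReal ((m.natAbs + 1 : ℝ) ^ (1 / 4 : ℝ)) * ‖aTilde f h m‖ₑ ≤
      6 * (‖equatorCoeff h m‖ₑ +
        ∑' k : ℕ, ‖bCoef f (m.natAbs + 2 * k) m * (PzeroM m k : ℂ)‖ₑ) := by
  set numerator := equatorCoeff h m - ∑' k : ℕ, bCoef f (m.natAbs + 2 * k) m * (PzeroM m k : ℂ)
    with numerator_def
  have denominator_bound : (m.natAbs + 1 : ℝ) ^ (1 / 4 : ℝ) ≤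
      6 * |∑' k, GammaKM m k * PzeroM m k| :=
    (natAbs_add_one_rpow_le m).trans
      (mul_le_mul_of_nonneg_left (abs_PzeroM_zero_le_abs_tsum m) (by norm_num))
  have denominator_pos : 0 < |∑' k, GammaKM m k * PzeroM m k| := by
    have : 0 < (m.natAbs + 1 : ℝ) ^ (1 / 4 : ℝ) := by positivity
    linarith
  have quotient_bound : (m.natAbs + 1 : ℝ) ^ (1 / 4 : ℝ) * ‖aTilde f h m‖ ≤ 6 * ‖numerator‖ := by
    rw [aTilde, ← numerator_def, norm_div, Complex.norm_real, Real.norm_eq_abs, mul_div_assoc',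
      div_le_iff₀ denominator_pos, mul_right_comm]
    gcongr
  calc _ = ENNReal.ofReal ((m.natAbs + 1 : ℝ) ^ (1 / 4 : ℝ) * ‖aTilde f h m‖) := by
        rw [ENNReal.ofReal_mul (by positivity), ofReal_norm]
    _ ≤ 6 * ‖numerator‖ₑ := by
        refine (ENNReal.ofReal_le_ofReal quotient_bound).trans_eq ?_
        rw [ENNReal.ofReal_mul (by norm_num), ofReal_norm, ENNReal.ofReal_ofNat]
    _ ≤ _ := by
        gcongr
        exact enorm_sub_le.trans (by gcongr; exact enorm_tsum_le_tsum_enorm)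

lemma exists_mul_enorm_aTilde_sq_le : ∃ K : ℝ≥0, ∀ (f : ℝ → ℝ → ℂ) (h : ℝ → ℂ) (m : ℤ),
    ENNReal.ofReal (m.natAbs + 1) * ‖aTilde f h m‖ₑ ^ 2 ≤
      K * (ENNReal.ofReal ((m.natAbs + 1 : ℝ) ^ (1 / 2 : ℝ)) * ‖equatorCoeff h m‖ₑ ^ 2 +
        ∑' n : ℕ, ‖flCoeff f (m.natAbs + n) m‖ₑ ^ 2) := by
  obtain ⟨K, hK⟩ := exists_sq_tsum_enorm_bCoef_mul_PzeroM_le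
  refine ⟨72 * (K + 1), fun f h m => ?_⟩
  set S := ∑' k : ℕ, ‖bCoef f (m.natAbs + 2 * k) m * (PzeroM m k : ℂ)‖ₑ
  set e := ENNReal.ofReal ((m.natAbs + 1 : ℝ) ^ (1 / 4 : ℝ)) with e_def
  have e_sq : e ^ 2 = ENNReal.ofReal ((m.natAbs + 1 : ℝ) ^ (1 / 2 : ℝ)) := by
    rw [e_def, ← ENNReal.ofReal_pow (by positivity), ← Real.rpow_mul_natCast (by positivity)]
    norm_num
  have e_pow_four : e ^ 4 = ENNReal.ofReal (m.natAbs + 1) := by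
    rw [e_def, ← ENNReal.ofReal_pow (by positivity), ← Real.rpow_mul_natCast (by positivity)]
    norm_num
  calc ENNReal.ofReal (m.natAbs + 1) * ‖aTilde f h m‖ₑ ^ 2 = e ^ 2 * (e * ‖aTilde f h m‖ₑ) ^ 2 := by
        rw [← e_pow_four]
        ring
    _ ≤ e ^ 2 * (6 * (‖equatorCoeff h m‖ₑ + S)) ^ 2 := by
        exact mul_le_mul_right (pow_le_pow_left' (rpow_mul_enorm_aTilde_le f h m) 2) _
    _ = 36 * (e * ‖equatorCoeff h m‖ₑ + e * S) ^ 2 := by ring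
    _ ≤ 36 * (2 * ((e * ‖equatorCoeff h m‖ₑ) ^ 2 + (e * S) ^ 2)) := by
        gcongr
        exact add_sq_le_two_mul_add_sq _ _
    _ = 72 * (1 * (e ^ 2 * ‖equatorCoeff h m‖ₑ ^ 2) + (e * S) ^ 2) := by ring
    _ ≤ 72 * ((K + 1) * (e ^ 2 * ‖equatorCoeff h m‖ₑ ^ 2) +
          (K + 1) * ∑' n : ℕ, ‖flCoeff f (m.natAbs + n) m‖ₑ ^ 2) := by
        gcongr
        · exact le_add_self
        · exact (hK f m).trans (by gcongr; exact le_self_add)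
    _ = _ := by
        rw [e_sq]
        push_cast
        ring

end EquatorialConstant

section Weights

/-- The weight of the coefficient of `Y_l^m` in the estimate of the series solution, for `M = |m|`
and `N = l - |m| + 1`. The first summand is the weight of `H^{s+1}`; the reciprocal of the second
is summable over all `l ≥ |m|`, which makes the series absolutely convergent. -/
def seriesWeight (s M N : ℝ) : ℝ :=
  (M + N) ^ (2 * s + 2) + ((M + 1) * N) ^ (3 / 2 : ℝ)

/-- The weight of `|f̂_l^m|²` in `‖f‖²_{H^s} + ‖f_φ‖²_{H^{(s-1/2)₊}}`, for `M = |m|` and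
`L = l + 1`. -/
def dataWeight (s M L : ℝ) : ℝ :=
  L ^ (2 * s) + M ^ 2 * L ^ (2 * max (s - 1 / 2) 0)

variable {s M N L : ℝ}

lemma seriesWeight_nonneg (hM : 0 ≤ M) (hN : 0 ≤ N) : 0 ≤ seriesWeight s M N := by
  unfold seriesWeight
  positivity

lemma dataWeight_nonneg (hL : 0 ≤ L) : 0 ≤ dataWeight s M L := by
  unfold dataWeight
  positivity

lemma dataWeight_mono {L' : ℝ} (hs : 0 ≤ s) (hL : 0 ≤ L) (hLL' : L ≤ L') :
    dataWeight s M L ≤ dataWeight s M L' := by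
  unfold dataWeight
  gcongr

lemma seriesWeight_mono {N' : ℝ} (hs : 0 ≤ s) (hM : 0 ≤ M) (hN : 0 ≤ N) (hNN' : N ≤ N') :
    seriesWeight s M N ≤ seriesWeight s M N' := by
  unfold seriesWeight
  gcongr

lemma seriesWeight_mul_le {c : ℝ} (hs : 0 ≤ s) (hM : 0 ≤ M) (hN : 0 ≤ N) (hc : 1 ≤ c) :
    seriesWeight s M (c * N) ≤ c ^ (2 * s + 2) * seriesWeight s M N := by
  have hc0 : 0 ≤ c := zero_le_one.trans hc
  rw [seriesWeight, seriesWeight, mul_add]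
  gcongr ?_ + ?_
  · rw [← Real.mul_rpow hc0 (by positivity)]
    gcongr
    nlinarith
  · rw [mul_left_comm, Real.mul_rpow hc0 (by positivity)]
    gcongr
    linarith

lemma seriesWeight_le_mul (hs : 0 ≤ s) (hM : 0 ≤ M) (hN : 1 ≤ N) :
    seriesWeight s M N ≤ (M + 1) ^ (2 * s + 2) * (2 * N ^ (2 * s + 2)) := by
  have sum_le_mul : M + N ≤ (M + 1) * N := by nlinarith
  have one_le_mul : 1 ≤ (M + 1) * N := by nlinarith
  calc seriesWeight s M N
      ≤ ((M + 1) * N) ^ (2 * s + 2) + ((M + 1) * N) ^ (2 * s + 2) := by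
        unfold seriesWeight
        gcongr ?_ + ?_
        · gcongr
        · exact Real.rpow_le_rpow_of_exponent_le one_le_mul (by linarith)
    _ = _ := by
        rw [Real.mul_rpow (by positivity) (by positivity)]
        ring

lemma rpow_add_two_le_dataWeight_mul (hM : 0 ≤ M) (hN : 1 ≤ N) :
    (M + N) ^ (2 * s + 2) ≤ 2 * dataWeight s M (M + N) * ((M + N) * N) := by
  have sum_pos : 0 < M + N := by linarith
  have sum_sq_le : (M + N) ^ 2 ≤ 2 * ((M + N) * N) + M ^ 2 * N := by nlinarith [sq_nonneg M]
  have exponent_le : (M + N) ^ (2 * s) ≤ (M + N) ^ (2 * max (s - 1 / 2) 0) * (M + N) := by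
    rw [← Real.rpow_add_one sum_pos.ne']
    exact Real.rpow_le_rpow_of_exponent_le (by linarith)
      (by linarith [le_max_left (s - 1 / 2) 0])
  have product_pos : 0 ≤ M ^ 2 * ((M + N) ^ (2 * max (s - 1 / 2) 0) * ((M + N) * N)) := by
    positivity
  calc (M + N) ^ (2 * s + 2) = (M + N) ^ (2 * s) * (M + N) ^ 2 := by
        rw [Real.rpow_add sum_pos, Real.rpow_two]
    _ ≤ (M + N) ^ (2 * s) * (2 * ((M + N) * N) + M ^ 2 * N) := by gcongr
    _ = 2 * (M + N) ^ (2 * s) * ((M + N) * N) + M ^ 2 * N * (M + N) ^ (2 * s) := by ring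
    _ ≤ 2 * (M + N) ^ (2 * s) * ((M + N) * N) +
          M ^ 2 * N * ((M + N) ^ (2 * max (s - 1 / 2) 0) * (M + N)) := by gcongr
    _ ≤ 2 * dataWeight s M (M + N) * ((M + N) * N) := by
        rw [dataWeight]
        linarith

lemma rpow_three_halves_le_dataWeight_mul (hs : 0 ≤ s) (hM : 0 ≤ M) (hN : 1 ≤ N) :
    ((M + 1) * N) ^ (3 / 2 : ℝ) ≤ 2 * dataWeight s M (M + N) * ((M + N) * N) := by
  have one_le_sum : 1 ≤ M + N := by linarith
  have sqrt_le : √((M + 1) * N) ≤ M + N := Real.sqrt_le_left (by positivity) |>.mpr (by nlinarith)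
  have one_add_sq_le : 1 + M ^ 2 ≤ dataWeight s M (M + N) := by
    unfold dataWeight
    have := Real.one_le_rpow one_le_sum (z := 2 * s) (by linarith)
    have := Real.one_le_rpow one_le_sum (z := 2 * max (s - 1 / 2) 0)
      (mul_nonneg two_pos.le (le_max_right _ _))
    nlinarith [sq_nonneg M]
  calc ((M + 1) * N) ^ (3 / 2 : ℝ) = √((M + 1) * N) * ((M + 1) * N) := by
        rw [Real.sqrt_eq_rpow, ← Real.rpow_add_one (by positivity)]
        norm_num
    _ ≤ (M + N) * ((M + 1) * N) := by gcongr
    _ = (M + 1) * ((M + N) * N) := by ring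
    _ ≤ 2 * dataWeight s M (M + N) * ((M + N) * N) := by
        gcongr
        nlinarith [sq_nonneg (M - 1), sq_nonneg M]

lemma seriesWeight_le_dataWeight_mul (hs : 0 ≤ s) (hM : 0 ≤ M) (hN : 1 ≤ N) :
    seriesWeight s M N ≤ 4 * dataWeight s M (M + N) * ((M + N) * N) := by
  rw [seriesWeight]
  linarith [rpow_add_two_le_dataWeight_mul (s := s) hM hN,
    rpow_three_halves_le_dataWeight_mul hs hM hN]

lemma rpow_add_one_le_dataWeight (hs : 0 ≤ s) (hM : 0 ≤ M) (hL : M + 1 ≤ L) :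
    (M + 1) ^ (2 * s + 1) ≤ 2 * dataWeight s M L := by
  have hM1 : 0 < M + 1 := by positivity
  have := rpow_add_two_le_dataWeight_mul (s := s) hM le_rfl
  rw [mul_one, show 2 * s + 2 = (2 * s + 1) + 1 by ring, Real.rpow_add_one hM1.ne',
    mul_le_mul_iff_left₀ hM1] at this
  exact this.trans (mul_le_mul_of_nonneg_left (dataWeight_mono hs hM1.le hL) two_pos.le)

end Weights

section OrderwiseEstimate

/-- The part of `‖f‖²_{H^s} + ‖f_φ‖²_{H^{(s-1/2)₊}} + ‖h‖²_{H^{s+3/4}(ℰ)}` carried by the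
coefficients of order `m`. -/
def dataEnergy (s : ℝ) (f : ℝ → ℝ → ℂ) (h : ℝ → ℂ) (m : ℤ) : ℝ≥0∞ :=
  ENNReal.ofReal ((m.natAbs + 1) ^ (2 * (s + 3 / 4))) * ‖equatorCoeff h m‖ₑ ^ 2 +
    ∑' n : ℕ, ENNReal.ofReal (dataWeight s m.natAbs (m.natAbs + n + 1)) *
      ‖flCoeff f (m.natAbs + n) m‖ₑ ^ 2

/-- The coefficient of `r^{-l-1} Y_l^m` in the series solution. -/
def seriesCoeff (f : ℝ → ℝ → ℂ) (h : ℝ → ℂ) (p : ℕ × ℤ) : ℂ :=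
  bCoef f p.1 p.2 + cCoef f h p.1 p.2

lemma seriesCoeff_of_lt (f : ℝ → ℝ → ℂ) (h : ℝ → ℂ) {l : ℕ} {m : ℤ} (hlm : l < m.natAbs) :
    seriesCoeff f h (l, m) = 0 := by
  simp [seriesCoeff, bCoef, cCoef, bSeq, hlm.not_ge, show l + 1 - m.natAbs = 0 by omega]

lemma enorm_cCoef_sq_le (f : ℝ → ℝ → ℂ) (h : ℝ → ℂ) (m : ℤ) (n : ℕ) :
    ‖cCoef f h (m.natAbs + n) m‖ₑ ^ 2 ≤ ENNReal.ofReal (1 / 3) ^ n * ‖aTilde f h m‖ₑ ^ 2 := by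
  rw [cCoef, Nat.add_sub_cancel_left]
  split_ifs with hn
  · obtain ⟨k, rfl⟩ := Nat.dvd_of_mod_eq_zero hn.2
    rw [Nat.mul_div_cancel_left k two_pos, enorm_mul, mul_pow, pow_mul',
      ← ENNReal.ofReal_pow (p := 1 / 3) (by norm_num), ← ofReal_norm, Complex.norm_real,
      Real.norm_eq_abs]
    exact mul_le_mul_left
      (pow_le_pow_left' (ENNReal.ofReal_le_ofReal (abs_GammaKM_le m k)) 2) _
  · simp

lemma enorm_bSeq_add_two_sq_le (f : ℝ → ℝ → ℂ) (m : ℤ) (n : ℕ) :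
    ‖bSeq f m (n + 2)‖ₑ ^ 2 ≤
      ENNReal.ofReal (2 / 9) * ‖bSeq f m n‖ₑ ^ 2 + 2 * ‖aCoef f (m.natAbs + n) m‖ₑ ^ 2 := by
  have two_ninths : ENNReal.ofReal (2 / 9) = 2 * 3⁻¹ ^ 2 := by
    rw [show (2 / 9 : ℝ) = 2 * 3⁻¹ ^ 2 by norm_num, ENNReal.ofReal_mul two_pos.le,
      ENNReal.ofReal_pow (by norm_num), ENNReal.ofReal_inv_of_pos (by norm_num)]
    simp
  calc ‖bSeq f m (n + 2)‖ₑ ^ 2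
      ≤ (3⁻¹ * ‖bSeq f m n‖ₑ + ‖aCoef f (m.natAbs + n) m‖ₑ) ^ 2 := by
        exact pow_le_pow_left' (enorm_bSeq_add_two_le m n f) 2
    _ ≤ 2 * ((3⁻¹ * ‖bSeq f m n‖ₑ) ^ 2 + ‖aCoef f (m.natAbs + n) m‖ₑ ^ 2) :=
        add_sq_le_two_mul_add_sq _ _
    _ = _ := by
        rw [two_ninths]
        ring

variable {s : ℝ}

lemma seriesWeight_mul_enorm_aCoef_sq_le (hs : 0 ≤ s) (f : ℝ → ℝ → ℂ) (m : ℤ) (n : ℕ) :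
    ENNReal.ofReal (seriesWeight s m.natAbs (n + 1)) * ‖aCoef f (m.natAbs + n) m‖ₑ ^ 2 ≤
      4 * (ENNReal.ofReal (dataWeight s m.natAbs (m.natAbs + n + 1)) *
        ‖flCoeff f (m.natAbs + n) m‖ₑ ^ 2) := by
  have hM : (0 : ℝ) ≤ m.natAbs := m.natAbs.cast_nonneg
  have hN : (1 : ℝ) ≤ n + 1 := le_add_of_nonneg_left n.cast_nonneg
  have weight_le := seriesWeight_le_dataWeight_mul hs hM hN
  rw [← add_assoc] at weight_le
  have dataWeight_nonneg' : 0 ≤ dataWeight s m.natAbs (m.natAbs + n + 1) :=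
    dataWeight_nonneg (by positivity)
  rw [← ofReal_mul_norm_sq (seriesWeight_nonneg hM (by positivity)),
    ← ofReal_mul_norm_sq dataWeight_nonneg', ← ENNReal.ofReal_ofNat 4,
    ← ENNReal.ofReal_mul (by norm_num)]
  apply ENNReal.ofReal_le_ofReal
  calc seriesWeight s m.natAbs (n + 1) * ‖aCoef f (m.natAbs + n) m‖ ^ 2
      ≤ 4 * dataWeight s m.natAbs (m.natAbs + n + 1) * ((m.natAbs + n + 1) * (n + 1)) *
          ‖aCoef f (m.natAbs + n) m‖ ^ 2 := by gcongr
    _ = 4 * dataWeight s m.natAbs (m.natAbs + n + 1) *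
          (((m.natAbs + n + 1) * (n + 1)) * ‖aCoef f (m.natAbs + n) m‖ ^ 2) := by ring
    _ ≤ 4 * dataWeight s m.natAbs (m.natAbs + n + 1) * ‖flCoeff f (m.natAbs + n) m‖ ^ 2 :=
        mul_le_mul_of_nonneg_left (norm_aCoef_sq_mul_le m n f) (by positivity)
    _ = _ := by ring

lemma seriesWeight_two_step_le (hs : 0 ≤ s) {M : ℝ} (hM : 0 ≤ M) (i j : ℕ) :
    ENNReal.ofReal (seriesWeight s M (i + 2 + 2 * j : ℕ)) ≤
      ENNReal.ofReal ((2 * (j + 1)) ^ (2 * s + 2)) *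
        ENNReal.ofReal (seriesWeight s M (i + 1)) := by
  rw [← ENNReal.ofReal_mul (by positivity)]
  refine ENNReal.ofReal_le_ofReal ((seriesWeight_mono hs hM (by positivity) ?_).trans
    (seriesWeight_mul_le hs hM (by positivity) ?_))
  · push_cast
    nlinarith [mul_nonneg (i.cast_nonneg (α := ℝ)) (j.cast_nonneg (α := ℝ)),
      i.cast_nonneg (α := ℝ)]
  · linarith [j.cast_nonneg (α := ℝ)]

lemma exists_tsum_seriesWeight_mul_bCoef_le (hs : 0 ≤ s) :
    ∃ K : ℝ≥0, ∀ (f : ℝ → ℝ → ℂ) (h : ℝ → ℂ) (m : ℤ),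
      ∑' n : ℕ, ENNReal.ofReal (seriesWeight s m.natAbs (n + 1)) *
        ‖bCoef f (m.natAbs + n) m‖ₑ ^ 2 ≤ K * dataEnergy s f h m := by
  have geometric_ne_top := tsum_geometric_mul_rpow_ne_top (q := 2 / 9) (by norm_num) (by norm_num)
    two_pos.le (2 * s + 2)
  lift (∑' j : ℕ, ENNReal.ofReal (2 / 9) ^ j * ENNReal.ofReal ((2 * (j + 1)) ^ (2 * s + 2)))
    to ℝ≥0 using geometric_ne_top with G hG
  refine ⟨G * 8, fun f h m => ?_⟩
  let w : ℕ → ℝ≥0∞ := fun n => ENNReal.ofReal (seriesWeight s m.natAbs n)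
  calc _ = ∑' n : ℕ, w (n + 1) * ‖bSeq f m (n + 1)‖ₑ ^ 2 := by
        simp only [w, bCoef_natAbs_add, Nat.cast_add_one]
    _ ≤ ∑' n : ℕ, w n * ‖bSeq f m n‖ₑ ^ 2 :=
        ENNReal.tsum_comp_le_tsum_of_injective (add_left_injective 1)
          fun n => w n * ‖bSeq f m n‖ₑ ^ 2
    _ ≤ G * ∑' i : ℕ, ENNReal.ofReal (seriesWeight s m.natAbs (i + 1)) *
          (2 * ‖aCoef f (m.natAbs + i) m‖ₑ ^ 2) := by
        rw [hG]
        exact tsum_mul_le_of_two_step_recurrence (by simp [bSeq]) (by simp [bSeq])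
          (enorm_bSeq_add_two_sq_le f m)
          (seriesWeight_two_step_le hs m.natAbs.cast_nonneg)
    _ ≤ G * ∑' i : ℕ, 2 * (4 * (ENNReal.ofReal (dataWeight s m.natAbs (m.natAbs + i + 1)) *
          ‖flCoeff f (m.natAbs + i) m‖ₑ ^ 2)) := by
        refine mul_le_mul_right (ENNReal.tsum_le_tsum fun i => ?_) _
        rw [mul_left_comm]
        exact mul_le_mul_right (seriesWeight_mul_enorm_aCoef_sq_le hs f m i) _
    _ = (G * 8 : ℝ≥0) * ∑' i : ℕ, ENNReal.ofReal (dataWeight s m.natAbs (m.natAbs + i + 1)) *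
          ‖flCoeff f (m.natAbs + i) m‖ₑ ^ 2 := by
        rw [ENNReal.tsum_mul_left, ENNReal.tsum_mul_left]
        push_cast
        ring
    _ ≤ _ := mul_le_mul_right le_add_self _

lemma exists_rpow_mul_enorm_aTilde_sq_le (hs : 0 ≤ s) :
    ∃ K : ℝ≥0, ∀ (f : ℝ → ℝ → ℂ) (h : ℝ → ℂ) (m : ℤ),
      ENNReal.ofReal ((m.natAbs + 1) ^ (2 * s + 2)) * ‖aTilde f h m‖ₑ ^ 2 ≤
        K * dataEnergy s f h m := by
  obtain ⟨K, hK⟩ := exists_mul_enorm_aTilde_sq_le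
  refine ⟨2 * K, fun f h m => ?_⟩
  set M := (m.natAbs : ℝ)
  have hM : 0 ≤ M := m.natAbs.cast_nonneg
  have hM1 : 0 < M + 1 := by positivity
  have data_le (n : ℕ) : ENNReal.ofReal ((M + 1) ^ (2 * s + 1)) *
      ‖flCoeff f (m.natAbs + n) m‖ₑ ^ 2 ≤
      2 * (ENNReal.ofReal (dataWeight s M (M + n + 1)) * ‖flCoeff f (m.natAbs + n) m‖ₑ ^ 2) := by
    rw [← mul_assoc, ← ENNReal.ofReal_ofNat 2, ← ENNReal.ofReal_mul two_pos.le]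
    gcongr
    exact rpow_add_one_le_dataWeight hs hM (by linarith [n.cast_nonneg (α := ℝ)])
  calc ENNReal.ofReal ((M + 1) ^ (2 * s + 2)) * ‖aTilde f h m‖ₑ ^ 2
      = ENNReal.ofReal ((M + 1) ^ (2 * s + 1)) *
          (ENNReal.ofReal (M + 1) * ‖aTilde f h m‖ₑ ^ 2) := by
        rw [← mul_assoc, ← ENNReal.ofReal_mul (by positivity), ← Real.rpow_add_one hM1.ne']
        ring_nf
    _ ≤ ENNReal.ofReal ((M + 1) ^ (2 * s + 1)) *
          (K * (ENNReal.ofReal ((M + 1) ^ (1 / 2 : ℝ)) * ‖equatorCoeff h m‖ₑ ^ 2 +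
            ∑' n : ℕ, ‖flCoeff f (m.natAbs + n) m‖ₑ ^ 2)) := mul_le_mul_right (hK f h m) _
    _ = K * (ENNReal.ofReal ((M + 1) ^ (2 * (s + 3 / 4))) * ‖equatorCoeff h m‖ₑ ^ 2 +
          ∑' n : ℕ, ENNReal.ofReal ((M + 1) ^ (2 * s + 1)) *
            ‖flCoeff f (m.natAbs + n) m‖ₑ ^ 2) := by
        rw [show 2 * (s + 3 / 4) = 2 * s + 1 + 1 / 2 by ring, Real.rpow_add hM1 (2 * s + 1),
          ENNReal.ofReal_mul (by positivity), ENNReal.tsum_mul_left]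
        ring
    _ ≤ K * (2 * (ENNReal.ofReal ((M + 1) ^ (2 * (s + 3 / 4))) * ‖equatorCoeff h m‖ₑ ^ 2) +
          ∑' n : ℕ, 2 * (ENNReal.ofReal (dataWeight s M (M + n + 1)) *
            ‖flCoeff f (m.natAbs + n) m‖ₑ ^ 2)) :=
        mul_le_mul_right (add_le_add (le_mul_of_one_le_left' one_le_two)
          (ENNReal.tsum_le_tsum data_le)) _
    _ = (2 * K : ℝ≥0) * dataEnergy s f h m := by
        rw [ENNReal.tsum_mul_left, dataEnergy]
        push_cast
        ring

lemma exists_tsum_seriesWeight_mul_cCoef_le (hs : 0 ≤ s) :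
    ∃ K : ℝ≥0, ∀ (f : ℝ → ℝ → ℂ) (h : ℝ → ℂ) (m : ℤ),
      ∑' n : ℕ, ENNReal.ofReal (seriesWeight s m.natAbs (n + 1)) *
        ‖cCoef f h (m.natAbs + n) m‖ₑ ^ 2 ≤ K * dataEnergy s f h m := by
  have geometric_ne_top := tsum_geometric_mul_rpow_ne_top (q := 1 / 3) (by norm_num) (by norm_num)
    one_pos.le (2 * s + 2)
  simp only [one_mul] at geometric_ne_top
  lift (∑' j : ℕ, ENNReal.ofReal (1 / 3) ^ j * ENNReal.ofReal ((j + 1) ^ (2 * s + 2)))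
    to ℝ≥0 using geometric_ne_top with G hG
  obtain ⟨K, hK⟩ := exists_rpow_mul_enorm_aTilde_sq_le hs
  refine ⟨2 * G * K, fun f h m => ?_⟩
  set M := (m.natAbs : ℝ)
  have term_le (n : ℕ) : ENNReal.ofReal (seriesWeight s M (n + 1)) *
      ‖cCoef f h (m.natAbs + n) m‖ₑ ^ 2 ≤
      2 * (ENNReal.ofReal (1 / 3) ^ n * ENNReal.ofReal ((n + 1) ^ (2 * s + 2))) *
        (ENNReal.ofReal ((M + 1) ^ (2 * s + 2)) * ‖aTilde f h m‖ₑ ^ 2) := by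
    have weight_le := ENNReal.ofReal_le_ofReal (seriesWeight_le_mul hs (m.natAbs.cast_nonneg)
      (le_add_of_nonneg_left n.cast_nonneg : (1 : ℝ) ≤ n + 1))
    rw [ENNReal.ofReal_mul (by positivity), ENNReal.ofReal_mul two_pos.le,
      ENNReal.ofReal_ofNat] at weight_le
    refine (mul_le_mul' weight_le (enorm_cCoef_sq_le f h m n)).trans_eq ?_
    ring
  calc _ ≤ _ := ENNReal.tsum_le_tsum term_le
    _ = 2 * G * (ENNReal.ofReal ((M + 1) ^ (2 * s + 2)) * ‖aTilde f h m‖ₑ ^ 2) := by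
        rw [ENNReal.tsum_mul_right, ENNReal.tsum_mul_left, hG]
    _ ≤ 2 * G * (K * dataEnergy s f h m) := mul_le_mul_right (hK f h m) _
    _ = _ := by
        push_cast
        ring

theorem exists_tsum_seriesWeight_mul_seriesCoeff_le (hs : 0 ≤ s) :
    ∃ K : ℝ≥0, ∀ (f : ℝ → ℝ → ℂ) (h : ℝ → ℂ) (m : ℤ),
      ∑' n : ℕ, ENNReal.ofReal (seriesWeight s m.natAbs (n + 1)) *
        ‖seriesCoeff f h (m.natAbs + n, m)‖ₑ ^ 2 ≤ K * dataEnergy s f h m := by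
  obtain ⟨Kb, hKb⟩ := exists_tsum_seriesWeight_mul_bCoef_le hs
  obtain ⟨Kc, hKc⟩ := exists_tsum_seriesWeight_mul_cCoef_le hs
  refine ⟨2 * (Kb + Kc), fun f h m => ?_⟩
  calc _ ≤ ∑' n : ℕ, 2 * (ENNReal.ofReal (seriesWeight s m.natAbs (n + 1)) *
          ‖bCoef f (m.natAbs + n) m‖ₑ ^ 2 + ENNReal.ofReal (seriesWeight s m.natAbs (n + 1)) *
          ‖cCoef f h (m.natAbs + n) m‖ₑ ^ 2) := by
        refine ENNReal.tsum_le_tsum fun n => ?_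
        rw [← mul_add, mul_left_comm]
        exact mul_le_mul_right ((pow_le_pow_left' (enorm_add_le _ _) 2).trans
          (add_sq_le_two_mul_add_sq _ _)) _
    _ ≤ 2 * (Kb * dataEnergy s f h m + Kc * dataEnergy s f h m) := by
        rw [ENNReal.tsum_mul_left, ENNReal.tsum_add]
        exact mul_le_mul_right (add_le_add (hKb f h m) (hKc f h m)) _
    _ = _ := by
        push_cast
        ring

/-- The right-hand side of the estimate, squared and expressed through the coefficients. -/
def totalEnergy (s : ℝ) (f : ℝ → ℝ → ℂ) (h : ℝ → ℂ) : ℝ≥0∞ := ∑' m, dataEnergy s f h m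

theorem exists_tsum_rpow_mul_seriesCoeff_le (hs : 0 ≤ s) :
    ∃ K : ℝ≥0, ∀ (f : ℝ → ℝ → ℂ) (h : ℝ → ℂ),
      ∑' p : ℕ × ℤ, ENNReal.ofReal ((p.1 + 1) ^ (2 * (s + 1))) * ‖seriesCoeff f h p‖ₑ ^ 2 ≤
        K * totalEnergy s f h := by
  obtain ⟨K, hK⟩ := exists_tsum_seriesWeight_mul_seriesCoeff_le hs
  refine ⟨K, fun f h => ?_⟩
  rw [tsum_nat_prod_int_eq fun l m hlm => by simp [seriesCoeff_of_lt f h hlm], totalEnergy,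
    ← ENNReal.tsum_mul_left]
  refine ENNReal.tsum_le_tsum fun m => (ENNReal.tsum_le_tsum fun n => ?_).trans (hK f h m)
  gcongr
  rw [seriesWeight, mul_add_one, Nat.cast_add, add_assoc]
  exact le_add_of_nonneg_right (by positivity)

theorem tsum_enorm_seriesCoeff_ne_top (hs : 0 ≤ s) {f : ℝ → ℝ → ℂ} {h : ℝ → ℂ}
    (hfh : totalEnergy s f h ≠ ⊤) : ∑' p, ‖seriesCoeff f h p‖ₑ ≠ ⊤ := by
  obtain ⟨K, hK⟩ := exists_tsum_seriesWeight_mul_seriesCoeff_le hs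
  let u : ℕ → ℝ≥0∞ := fun n => ENNReal.ofReal ((n + 1) ^ (-(3 / 2) : ℝ))
  have term_le (m : ℤ) (n : ℕ) : ‖seriesCoeff f h (m.natAbs + n, m)‖ₑ ≤ u m.natAbs * u n +
      ENNReal.ofReal (seriesWeight s m.natAbs (n + 1)) *
        ‖seriesCoeff f h (m.natAbs + n, m)‖ₑ ^ 2 := by
    have hw : 0 < ((m.natAbs + 1 : ℝ) * (n + 1)) ^ (3 / 2 : ℝ) := by positivity
    refine (le_inv_add_mul_sq _ (ENNReal.ofReal_pos.mpr hw).ne' ENNReal.ofReal_ne_top).trans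
      (add_le_add (le_of_eq ?_) (mul_le_mul_left (ENNReal.ofReal_le_ofReal ?_) _))
    · rw [← ENNReal.ofReal_inv_of_pos hw, ← Real.rpow_neg (by positivity),
        Real.mul_rpow (by positivity) (by positivity), ENNReal.ofReal_mul (by positivity)]
    · rw [seriesWeight]
      exact le_add_of_nonneg_left (by positivity)
  have hu_nat : ∑' n, u n ≠ ⊤ :=
    (summable_natCast_add_one_rpow (by norm_num)).tsum_ofReal_ne_top
  have hu_int : ∑' m : ℤ, u m.natAbs ≠ ⊤ :=
    (summable_natAbs_add_one_rpow (by norm_num)).tsum_ofReal_ne_top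
  refine ne_top_of_le_ne_top (ENNReal.add_ne_top.mpr ⟨ENNReal.mul_ne_top hu_int hu_nat,
    ENNReal.mul_ne_top ENNReal.coe_ne_top hfh⟩ : _ + K * totalEnergy s f h ≠ ⊤) ?_
  calc ∑' p, ‖seriesCoeff f h p‖ₑ
      = ∑' (m : ℤ) (n : ℕ), ‖seriesCoeff f h (m.natAbs + n, m)‖ₑ :=
        tsum_nat_prod_int_eq fun l m hlm => by simp [seriesCoeff_of_lt f h hlm]
    _ ≤ ∑' m : ℤ, (u m.natAbs * ∑' n, u n + K * dataEnergy s f h m) := by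
        refine ENNReal.tsum_le_tsum fun m => (ENNReal.tsum_le_tsum (term_le m)).trans ?_
        rw [ENNReal.tsum_add, ENNReal.tsum_mul_left]
        exact add_le_add_right (hK f h m) _
    _ = _ := by
        rw [ENNReal.tsum_add, ENNReal.tsum_mul_left, ENNReal.tsum_mul_right, totalEnergy]

end OrderwiseEstimate

section LegendreOrthogonality

open Polynomial

lemma integral_eval_derivative_mul {p q : ℝ[X]} {a b : ℝ} (ha : (p * q).eval a = 0)
    (hb : (p * q).eval b = 0) :
    ∫ x in a..b, (derivative p).eval x * q.eval x =
      -∫ x in a..b, p.eval x * (derivative q).eval x := by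
  rw [eval_mul] at ha hb
  have eval_integrable (r : ℝ[X]) : IntervalIntegrable (fun x => r.eval x) volume a b :=
    r.continuous.intervalIntegrable a b
  rw [intervalIntegral.integral_mul_deriv_eq_deriv_mul (fun x _ => p.hasDerivAt x)
    (fun x _ => q.hasDerivAt x) (eval_integrable _) (eval_integrable _), ha, hb]
  ring

lemma integral_eval_iterate_derivative_mul {p q : ℝ[X]} {a b : ℝ} {n : ℕ}
    (ha : ∀ i j, i + j + 1 = n → (derivative^[i] p * derivative^[j] q).eval a = 0)
    (hb : ∀ i j, i + j + 1 = n → (derivative^[i] p * derivative^[j] q).eval b = 0) :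
    ∫ x in a..b, (derivative^[n] p).eval x * q.eval x =
      (-1) ^ n * ∫ x in a..b, p.eval x * (derivative^[n] q).eval x := by
  induction n generalizing q with
  | zero => simp
  | succ n ih =>
    rw [Function.iterate_succ_apply',
      integral_eval_derivative_mul (q := q) (ha n 0 rfl) (hb n 0 rfl),
      ih (fun i j hij => ha i (j + 1) (by omega)) (fun i j hij => hb i (j + 1) (by omega)),
      ← Function.iterate_succ_apply, pow_succ]
    ring

lemma eval_iterate_derivative_eq_zero_of_pow_dvd {R : Type*} [CommRing R] {p q : R[X]} {n k : ℕ}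
    (hdvd : p ^ n ∣ q) (hk : k < n) {x : R} (hx : p.eval x = 0) :
    (derivative^[k] q).eval x = 0 :=
  eval_eq_zero_of_dvd_of_eval_eq_zero ((dvd_pow_self p (Nat.sub_ne_zero_of_lt hk)).trans
    (pow_sub_dvd_iterate_derivative_of_pow_dvd k hdvd)) hx

lemma iterate_derivative_eq_C_of_natDegree_le {R : Type*} [CommSemiring R] {p : R[X]} {n : ℕ}
    (hp : p.natDegree ≤ n) : derivative^[n] p = C (n.factorial * p.coeff n) := by
  ext k
  rw [coeff_iterate_derivative, coeff_C]
  split_ifs with hk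
  · rw [hk, zero_add, Nat.descFactorial_self, nsmul_eq_mul]
  · rw [coeff_eq_zero_of_natDegree_lt (by omega), smul_zero]

lemma integral_one_sub_sq_pow_succ (l : ℕ) :
    (2 * l + 3 : ℝ) * ∫ x in (-1 : ℝ)..1, (1 - x ^ 2) ^ (l + 1) =
      (2 * l + 2) * ∫ x in (-1 : ℝ)..1, (1 - x ^ 2) ^ l := by
  have antideriv (x : ℝ) : HasDerivAt (fun x : ℝ => x * (1 - x ^ 2) ^ (l + 1))
      ((2 * l + 3) * (1 - x ^ 2) ^ (l + 1) - (2 * l + 2) * (1 - x ^ 2) ^ l) x := by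
    refine ((hasDerivAt_id x).mul (((hasDerivAt_pow 2 x).const_sub 1).pow (l + 1))).congr_deriv ?_
    simp only [id, Nat.add_sub_cancel, Pi.pow_apply]
    push_cast
    ring
  have ftc := intervalIntegral.integral_eq_sub_of_hasDerivAt (a := -1) (b := 1)
    (fun x _ => antideriv x) (by apply Continuous.intervalIntegrable; fun_prop)
  rw [intervalIntegral.integral_sub (by apply Continuous.intervalIntegrable; fun_prop)
    (by apply Continuous.intervalIntegrable; fun_prop), intervalIntegral.integral_const_mul,
    intervalIntegral.integral_const_mul] at ftc
  norm_num at ftc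
  linarith

lemma integral_one_sub_sq_pow (l : ℕ) : ∫ x in (-1 : ℝ)..1, (1 - x ^ 2) ^ l =
    2 * (2 ^ l * l.factorial : ℝ) ^ 2 / (2 * l + 1).factorial := by
  induction l with
  | zero => norm_num
  | succ l ih =>
    have rec_eq := integral_one_sub_sq_pow_succ l
    rw [ih, mul_comm, ← eq_div_iff (by positivity)] at rec_eq
    rw [rec_eq, show 2 * (l + 1) + 1 = (2 * l + 1) + 1 + 1 by ring, Nat.factorial_succ (2 * l + 2),
      Nat.factorial_succ (2 * l + 1), Nat.factorial_succ l]
    push_cast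
    field_simp
    ring

lemma natDegree_X_sq_sub_one_pow_le (l : ℕ) : ((X ^ 2 - 1 : ℝ[X]) ^ l).natDegree ≤ l * 2 :=
  natDegree_pow_le_of_le l (by compute_degree)

lemma natDegree_legendreP_le (l : ℕ) : (legendreP l).natDegree ≤ l := by
  refine (natDegree_C_mul_le _ _).trans ((natDegree_iterate_derivative _ _).trans ?_)
  have := natDegree_X_sq_sub_one_pow_le l
  omega

lemma iterate_derivative_legendreP_eq_zero {l M : ℕ} (hlM : l < M) :
    derivative^[M] (legendreP l) = 0 :=
  iterate_derivative_eq_zero ((natDegree_legendreP_le l).trans_lt hlM)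

lemma coeff_legendreP_self (l : ℕ) :
    (legendreP l).coeff l = (2 * l).factorial / (2 ^ l * l.factorial * l.factorial) := by
  rw [legendreP, coeff_C_mul, coeff_iterate_derivative, ← two_mul, coeff_X_sq_sub_one_pow,
    nsmul_eq_mul, Nat.descFactorial_eq_div (by omega), show 2 * l - l = l by omega,
    Nat.cast_div (Nat.factorial_dvd_factorial (by omega)) (by positivity)]
  simp only [mul_inv_rev, tsub_self, pow_zero, Nat.choose_self, Nat.cast_one, mul_one]
  field_simp

variable {l M : ℕ}

lemma coeff_iterate_derivative_legendreP {l' : ℕ} (hM : M ≤ l) :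
    (derivative^[M] (legendreP l')).coeff (l - M) =
      l.factorial / (l - M).factorial * (legendreP l').coeff l := by
  rw [coeff_iterate_derivative, Nat.sub_add_cancel hM, nsmul_eq_mul, Nat.descFactorial_eq_div hM,
    Nat.cast_div (Nat.factorial_dvd_factorial (Nat.sub_le l M)) (by positivity)]

lemma integral_one_sub_sq_pow_mul_iterate_derivative_legendreP_mul (hM : M ≤ l) {q : ℝ[X]}
    (hq : q.natDegree ≤ l - M) :
    ∫ x in (-1 : ℝ)..1, (1 - x ^ 2) ^ M * (derivative^[M] (legendreP l)).eval x * q.eval x =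
      (M + l).factorial / (2 ^ l * l.factorial) * q.coeff (l - M) *
        ∫ x in (-1 : ℝ)..1, (1 - x ^ 2) ^ l := by
  -- Integrate by parts `M + l` times in Rodrigues' formula: the roots of `p` and `Q` at `±1` kill
  -- the boundary terms, and the `(M + l)`-th derivative of `Q` is constant.
  set p : ℝ[X] := (X ^ 2 - 1) ^ l
  set Q : ℝ[X] := (X ^ 2 - 1) ^ M * q
  have rodrigues (x : ℝ) : (1 - x ^ 2) ^ M * (derivative^[M] (legendreP l)).eval x * q.eval x =
      (-1) ^ M * (2 ^ l * l.factorial : ℝ)⁻¹ * ((derivative^[M + l] p).eval x * Q.eval x) := by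
    rw [iterate_derivative_legendreP l M, ← neg_sub, neg_pow]
    simp only [p, Q, eval_mul, eval_C, eval_pow, eval_sub, eval_one, eval_X]
    ring
  have boundary {x : ℝ} (hx : x ^ 2 = 1) (i j : ℕ) (hij : i + j + 1 = M + l) :
      (derivative^[i] p * derivative^[j] Q).eval x = 0 := by
    have root : (X ^ 2 - 1 : ℝ[X]).eval x = 0 := by simp [hx]
    rw [eval_mul]
    obtain hj | hi : j < M ∨ i < l := by omega
    · rw [eval_iterate_derivative_eq_zero_of_pow_dvd (Dvd.intro _ rfl) hj root, mul_zero]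
    · rw [eval_iterate_derivative_eq_zero_of_pow_dvd dvd_rfl hi root, zero_mul]
  have top_derivative : derivative^[M + l] Q = C ((M + l).factorial * q.coeff (l - M)) := by
    have degree_split : M + l = M * 2 + (l - M) := by omega
    rw [iterate_derivative_eq_C_of_natDegree_le (natDegree_mul_le.trans ((add_le_add
      (natDegree_X_sq_sub_one_pow_le M) hq).trans degree_split.ge)), degree_split,
      coeff_mul_add_eq_of_natDegree_le (natDegree_X_sq_sub_one_pow_le M) hq, mul_comm M 2,
      coeff_X_sq_sub_one_pow]
    simp
  have eval_p (x : ℝ) : p.eval x = (-1) ^ l * (1 - x ^ 2) ^ l := by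
    simp [p, ← mul_pow]
  have sign : (-1 : ℝ) ^ M * (-1) ^ (M + l) * (-1) ^ l = 1 := by
    rw [← pow_add, ← pow_add, Even.neg_one_pow ⟨M + l, by ring⟩]
  simp_rw [rodrigues]
  rw [intervalIntegral.integral_const_mul,
    integral_eval_iterate_derivative_mul (boundary (by norm_num)) (boundary (by norm_num)),
    top_derivative]
  simp only [eval_C, eval_p, intervalIntegral.integral_mul_const,
    intervalIntegral.integral_const_mul]
  linear_combination ((M + l).factorial / (2 ^ l * l.factorial) * q.coeff (l - M) *
    ∫ x in (-1 : ℝ)..1, (1 - x ^ 2) ^ l) * sign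

lemma integral_one_sub_sq_pow_mul_legendreP_self (hM : M ≤ l) :
    ∫ x in (-1 : ℝ)..1, (1 - x ^ 2) ^ M * (derivative^[M] (legendreP l)).eval x *
      (derivative^[M] (legendreP l)).eval x =
      2 * (l + M).factorial / ((2 * l + 1) * (l - M).factorial : ℝ) := by
  rw [integral_one_sub_sq_pow_mul_iterate_derivative_legendreP_mul hM
    ((natDegree_iterate_derivative _ _).trans
      (Nat.sub_le_sub_right (natDegree_legendreP_le l) M)),
    coeff_iterate_derivative_legendreP hM, coeff_legendreP_self, integral_one_sub_sq_pow,
    Nat.factorial_succ, add_comm M l]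
  push_cast
  field_simp

lemma integral_one_sub_sq_pow_mul_legendreP_of_lt {l' : ℕ} (hM : M ≤ l) (hl : l' < l) :
    ∫ x in (-1 : ℝ)..1, (1 - x ^ 2) ^ M * (derivative^[M] (legendreP l)).eval x *
      (derivative^[M] (legendreP l')).eval x = 0 := by
  have natDegree_le : (derivative^[M] (legendreP l')).natDegree ≤ l - M :=
    (natDegree_iterate_derivative _ _).trans
      (Nat.sub_le_sub_right ((natDegree_legendreP_le l').trans hl.le) M)
  rw [integral_one_sub_sq_pow_mul_iterate_derivative_legendreP_mul hM natDegree_le,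
    coeff_iterate_derivative_legendreP hM,
    coeff_eq_zero_of_natDegree_lt ((natDegree_legendreP_le l').trans_lt hl)]
  ring

theorem integral_one_sub_sq_pow_mul_legendreP_mul_legendreP {l' : ℕ} (hM : M ≤ l) (hM' : M ≤ l') :
    ∫ x in (-1 : ℝ)..1, (1 - x ^ 2) ^ M * (derivative^[M] (legendreP l)).eval x *
      (derivative^[M] (legendreP l')).eval x =
      if l = l' then 2 * (l + M).factorial / ((2 * l + 1) * (l - M).factorial : ℝ) else 0 := by
  rcases lt_trichotomy l l' with hl | rfl | hl
  · simpa only [if_neg hl.ne, mul_right_comm] using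
      integral_one_sub_sq_pow_mul_legendreP_of_lt hM' hl
  · rw [if_pos rfl, integral_one_sub_sq_pow_mul_legendreP_self hM]
  · rw [if_neg hl.ne', integral_one_sub_sq_pow_mul_legendreP_of_lt hM hl]

end LegendreOrthogonality

section SphericalHarmonics

/-- The latitude factor `cos θ dθ` of the surface measure of the sphere. -/
def latitudeMeasure : Measure ℝ :=
  (volume.restrict (Set.Icc (-(π / 2)) (π / 2))).withDensity fun θ => ENNReal.ofReal (cos θ)

/-- The longitude factor `dφ` of the surface measure of the sphere. -/
def longitudeMeasure : Measure ℝ := volume.restrict (Set.Ico (-π) π)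

lemma latitudeMeasure_le : latitudeMeasure ≤ volume.restrict (Set.Icc (-(π / 2)) (π / 2)) := by
  refine (withDensity_mono (ae_of_all _ fun θ => ?_)).trans_eq withDensity_one
  simpa using cos_le_one θ

instance : IsFiniteMeasure latitudeMeasure := isFiniteMeasure_of_le _ latitudeMeasure_le

instance : IsFiniteMeasure longitudeMeasure := by
  unfold longitudeMeasure
  infer_instance

lemma sphereMeasure_eq_prod : sphereMeasure = latitudeMeasure.prod longitudeMeasure := by
  rw [latitudeMeasure, longitudeMeasure, prod_withDensity_left (by fun_prop),
    Measure.prod_restrict, sphereMeasure, Measure.volume_eq_prod]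

instance : IsFiniteMeasure sphereMeasure := by
  rw [sphereMeasure_eq_prod]
  infer_instance

lemma integral_longitudeMeasure (g : ℝ → ℂ) :
    ∫ φ, g φ ∂longitudeMeasure = ∫ φ in (-π)..π, g φ := by
  rw [longitudeMeasure, intervalIntegral.integral_of_le (by linarith [pi_pos]),
    integral_Ico_eq_integral_Ioc]

lemma integral_latitudeMeasure_comp_sin {g : ℝ → ℝ} (hg : Continuous g) :
    ∫ θ, g (sin θ) ∂latitudeMeasure = ∫ x in (-1 : ℝ)..1, g x := by
  have substitution := intervalIntegral.integral_comp_mul_deriv (a := -(π / 2)) (b := π / 2)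
    (fun x _ => Real.hasDerivAt_sin x) (by fun_prop) hg
  rw [Real.sin_neg, Real.sin_pi_div_two] at substitution
  rw [latitudeMeasure, integral_withDensity_eq_integral_toReal_smul (by fun_prop) (by simp),
    integral_Icc_eq_integral_Ioc, ← intervalIntegral.integral_of_le (by linarith [pi_pos]),
    ← substitution]
  refine intervalIntegral.integral_congr fun θ hθ => ?_
  rw [Set.uIcc_of_le (by linarith [pi_pos])] at hθ
  simp only [Function.comp, smul_eq_mul]
  rw [ENNReal.toReal_ofReal (cos_nonneg_of_mem_Icc hθ), mul_comm]

lemma exp_int_mul_pi_eq (k : ℤ) :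
    Complex.exp (Complex.I * k * π) = Complex.exp (Complex.I * k * ((-π : ℝ) : ℂ)) := by
  rw [Complex.exp_eq_exp_iff_exists_int]
  exact ⟨k, by push_cast; ring⟩

lemma integral_exp_int_mul_I (k : ℤ) : ∫ φ in (-π)..π, Complex.exp (Complex.I * k * φ) =
    if k = 0 then 2 * (π : ℂ) else 0 := by
  split_ifs with hk
  · simp [hk, two_mul]
  · rw [integral_exp_mul_complex (by simp [hk]), exp_int_mul_pi_eq, sub_self, zero_div]

lemma continuous_assocLegendre (l M : ℕ) : Continuous (assocLegendre l M) := by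
  unfold assocLegendre
  exact (continuous_const.mul (Continuous.rpow_const (by fun_prop) fun x => Or.inr (by positivity)))
    |>.mul (Polynomial.continuous _)

lemma continuous_Ylm (l : ℕ) (m : ℤ) : Continuous fun p : ℝ × ℝ => Ylm l m p.1 p.2 := by
  unfold Ylm
  have := continuous_assocLegendre l m.natAbs
  fun_prop

lemma Ylm_of_lt {l : ℕ} {m : ℤ} (hlm : l < m.natAbs) (θ φ : ℝ) : Ylm l m θ φ = 0 := by
  simp [Ylm, assocLegendre, iterate_derivative_legendreP_eq_zero hlm]

lemma flCoeff_of_lt (f : ℝ → ℝ → ℂ) {l : ℕ} {m : ℤ} (hlm : l < m.natAbs) :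
    flCoeff f l m = 0 := by
  simp [flCoeff, Ylm_of_lt hlm]

lemma assocLegendre_mul_assocLegendre (l l' M : ℕ) {x : ℝ} (hx : x ∈ Set.Icc (-1) 1) :
    assocLegendre l M x * assocLegendre l' M x =
      (1 - x ^ 2) ^ M * (Polynomial.derivative^[M] (legendreP l)).eval x *
        (Polynomial.derivative^[M] (legendreP l')).eval x := by
  have hx' : 0 ≤ 1 - x ^ 2 := by nlinarith [hx.1, hx.2]
  have sqrt_mul_self : (1 - x ^ 2) ^ ((M : ℝ) / 2) * (1 - x ^ 2) ^ ((M : ℝ) / 2) =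
      (1 - x ^ 2) ^ M := by
    rw [← Real.rpow_add_of_nonneg hx' (by positivity) (by positivity), add_halves,
      Real.rpow_natCast]
  have sign : (-1 : ℝ) ^ M * (-1) ^ M = 1 := by rw [← mul_pow]; norm_num
  rw [assocLegendre, assocLegendre, ← sqrt_mul_self]
  linear_combination ((1 - x ^ 2) ^ ((M : ℝ) / 2) * (1 - x ^ 2) ^ ((M : ℝ) / 2) *
    (Polynomial.derivative^[M] (legendreP l)).eval x *
    (Polynomial.derivative^[M] (legendreP l')).eval x) * sign

lemma integral_alphaY_mul_assocLegendre {l l' : ℕ} {m : ℤ} (hl : m.natAbs ≤ l)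
    (hl' : m.natAbs ≤ l') :
    ∫ θ, (alphaY l m * assocLegendre l m.natAbs (sin θ)) *
      (alphaY l' m * assocLegendre l' m.natAbs (sin θ)) ∂latitudeMeasure =
      if l = l' then (2 * π)⁻¹ else 0 := by
  have hc := continuous_assocLegendre l m.natAbs
  have hc' := continuous_assocLegendre l' m.natAbs
  rw [integral_latitudeMeasure_comp_sin (g := fun x =>
    (alphaY l m * assocLegendre l m.natAbs x) * (alphaY l' m * assocLegendre l' m.natAbs x))
    (by fun_prop)]
  simp_rw [mul_mul_mul_comm]
  rw [intervalIntegral.integral_const_mul, intervalIntegral.integral_congr fun x hx =>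
    assocLegendre_mul_assocLegendre l l' m.natAbs (by rwa [Set.uIcc_of_le (by norm_num)] at hx),
    integral_one_sub_sq_pow_mul_legendreP_mul_legendreP hl hl']
  split_ifs with hll
  · rw [← hll, ← sq, alphaY_sq]
    field_simp
    norm_num
  · rw [mul_zero]

lemma Ylm_mul_conj_Ylm (l l' : ℕ) (m m' : ℤ) (θ φ : ℝ) :
    Ylm l m θ φ * (starRingEnd ℂ) (Ylm l' m' θ φ) =
      (((alphaY l m * assocLegendre l m.natAbs (sin θ)) *
        (alphaY l' m' * assocLegendre l' m'.natAbs (sin θ)) : ℝ) : ℂ) *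
      Complex.exp (Complex.I * ((m - m' : ℤ) : ℂ) * φ) := by
  rw [Ylm, Ylm, map_mul, Complex.conj_ofReal, ← Complex.exp_conj]
  simp only [map_mul, Complex.conj_I, Complex.conj_ofReal, map_intCast]
  rw [mul_mul_mul_comm, ← Complex.exp_add, ← Complex.ofReal_mul]
  congr 2
  push_cast
  ring

theorem integral_Ylm_mul_conj_Ylm {l l' : ℕ} {m m' : ℤ} (hl : m.natAbs ≤ l)
    (hl' : m'.natAbs ≤ l') :
    ∫ p : ℝ × ℝ, Ylm l m p.1 p.2 * (starRingEnd ℂ) (Ylm l' m' p.1 p.2) ∂sphereMeasure =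
      if (l, m) = (l', m') then 1 else 0 := by
  simp_rw [Ylm_mul_conj_Ylm]
  rw [sphereMeasure_eq_prod, integral_prod_mul (μ := latitudeMeasure) (ν := longitudeMeasure)
    (fun θ => (((alphaY l m * assocLegendre l m.natAbs (sin θ)) *
      (alphaY l' m' * assocLegendre l' m'.natAbs (sin θ)) : ℝ) : ℂ))
    (fun φ => Complex.exp (Complex.I * ((m - m' : ℤ) : ℂ) * φ)),
    integral_longitudeMeasure, integral_exp_int_mul_I, integral_complex_ofReal]
  by_cases hm : m = m'
  · subst hm
    rw [integral_alphaY_mul_assocLegendre hl hl']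
    by_cases hll : l = l'
    · simp only [hll, ↓reduceIte, sub_self, ← Complex.ofReal_ofNat, ← Complex.ofReal_mul]
      rw [inv_mul_cancel₀ two_pi_pos.ne', Complex.ofReal_one]
    · simp [hll]
  · simp [hm, sub_eq_zero]

lemma eLpNorm_Ylm_le_one (l : ℕ) (m : ℤ) :
    eLpNorm (fun p : ℝ × ℝ => Ylm l m p.1 p.2) 2 sphereMeasure ≤ 1 := by
  rcases lt_or_ge l m.natAbs with hlm | hlm
  · simp [Ylm_of_lt hlm]
  have norm_sq_integral := integral_Ylm_mul_conj_Ylm hlm hlm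
  simp_rw [Complex.mul_conj, Complex.normSq_eq_norm_sq, if_pos] at norm_sq_integral
  rw [integral_complex_ofReal, Complex.ofReal_eq_one] at norm_sq_integral
  have norm_sq_integrable := integrable_of_integral_eq_one norm_sq_integral
  have lintegral_eq_one := ofReal_integral_eq_lintegral_ofReal norm_sq_integrable
    (ae_of_all _ fun p => by positivity)
  rw [norm_sq_integral, ENNReal.ofReal_one] at lintegral_eq_one
  rw [eLpNorm_eq_lintegral_rpow_enorm_toReal (by norm_num) (by norm_num)]
  refine ENNReal.rpow_le_one ?_ (by positivity)
  simp [lintegral_eq_one, ← ofReal_norm, ← ENNReal.ofReal_pow]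

lemma memLp_Ylm (l : ℕ) (m : ℤ) :
    MemLp (fun p : ℝ × ℝ => Ylm l m p.1 p.2) 2 sphereMeasure :=
  ⟨(continuous_Ylm l m).aestronglyMeasurable, (eLpNorm_Ylm_le_one l m).trans_lt ENNReal.one_lt_top⟩

lemma memLp_conj_Ylm (l : ℕ) (m : ℤ) :
    MemLp (fun p : ℝ × ℝ => (starRingEnd ℂ) (Ylm l m p.1 p.2)) 2 sphereMeasure :=
  (memLp_Ylm l m).star

end SphericalHarmonics

section SquareIntegrableSeries

lemma memLp_tsum {α ι E : Type*} [MeasurableSpace α] [Countable ι] [NormedAddCommGroup E]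
    [CompleteSpace E] {μ : Measure α} {p : ℝ≥0∞} (hp : 1 ≤ p) {F : ι → α → E}
    (hF : ∀ i, MemLp (F i) p μ) (hsum : ∑' i, eLpNorm (F i) p μ ≠ ⊤) :
    MemLp (fun x => ∑' i, F i x) p μ := by
  have : Fact (1 ≤ p) := ⟨hp⟩
  have coe_toLp : ∀ᵐ x ∂μ, ∀ i, (hF i).toLp (F i) x = F i x :=
    ae_all_iff.mpr fun i => (hF i).coeFn_toLp
  have coe_tsum := Lp.coeFn_tsum (f := fun i => (hF i).toLp (F i)) (by simpa using hsum)
  refine (memLp_congr_ae ?_).mp (Lp.memLp (∑' i, (hF i).toLp (F i)))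
  filter_upwards [coe_toLp, coe_tsum] with x hx hx'
  simp_rw [hx', hx]

lemma integral_tsum_mul {α ι 𝕜 : Type*} [MeasurableSpace α] [Countable ι] [RCLike 𝕜]
    {μ : Measure α} {F : ι → α → 𝕜} {g : α → 𝕜} (hF : ∀ i, MemLp (F i) 2 μ) (hg : MemLp g 2 μ)
    (hsum : ∑' i, eLpNorm (F i) 2 μ ≠ ⊤) :
    ∫ x, (∑' i, F i x) * g x ∂μ = ∑' i, ∫ x, F i x * g x ∂μ := by
  simp_rw [← tsum_mul_right]
  refine integral_tsum (fun i => (hF i).1.mul hg.1) ?_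
  refine ne_top_of_le_ne_top (ENNReal.mul_ne_top hsum hg.eLpNorm_ne_top) ?_
  rw [← ENNReal.tsum_mul_right]
  refine ENNReal.tsum_le_tsum fun i => ?_
  rw [← eLpNorm_one_eq_lintegral_enorm]
  simpa only [smul_eq_mul, Pi.mul_def] using
    eLpNorm_smul_le_mul_eLpNorm (p := 2) (q := 2) (r := 1) hg.1 (hF i).1

variable {d : ℕ × ℤ → ℂ}

lemma tsum_eLpNorm_mul_Ylm_ne_top (hd : ∑' p, ‖d p‖ₑ ≠ ⊤) :
    ∑' p : ℕ × ℤ, eLpNorm (fun x : ℝ × ℝ => d p * Ylm p.1 p.2 x.1 x.2) 2 sphereMeasure ≠ ⊤ := by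
  refine ne_top_of_le_ne_top hd (ENNReal.tsum_le_tsum fun p => ?_)
  calc eLpNorm (fun x : ℝ × ℝ => d p * Ylm p.1 p.2 x.1 x.2) 2 sphereMeasure
      = ‖d p‖ₑ * eLpNorm (fun x : ℝ × ℝ => Ylm p.1 p.2 x.1 x.2) 2 sphereMeasure :=
        eLpNorm_const_smul (d p) _ 2 sphereMeasure
    _ ≤ ‖d p‖ₑ := mul_le_of_le_one_right' (eLpNorm_Ylm_le_one p.1 p.2)

lemma memLp_tsum_mul_Ylm (hd : ∑' p, ‖d p‖ₑ ≠ ⊤) :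
    MemLp (fun x : ℝ × ℝ => ∑' p : ℕ × ℤ, d p * Ylm p.1 p.2 x.1 x.2) 2 sphereMeasure :=
  memLp_tsum one_le_two (fun p => (memLp_Ylm p.1 p.2).const_mul (d p))
    (tsum_eLpNorm_mul_Ylm_ne_top hd)

theorem flCoeff_tsum_mul_Ylm (hd : ∑' p, ‖d p‖ₑ ≠ ⊤) (hd0 : ∀ l m, l < m.natAbs → d (l, m) = 0)
    (l : ℕ) (m : ℤ) :
    flCoeff (fun θ φ => ∑' p : ℕ × ℤ, d p * Ylm p.1 p.2 θ φ) l m = d (l, m) := by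
  rcases lt_or_ge l m.natAbs with hlm | hlm
  · rw [flCoeff_of_lt _ hlm, hd0 l m hlm]
  have termwise (p : ℕ × ℤ) : ∫ x : ℝ × ℝ, d p * Ylm p.1 p.2 x.1 x.2 *
      (starRingEnd ℂ) (Ylm l m x.1 x.2) ∂sphereMeasure = if p = (l, m) then d p else 0 := by
    simp_rw [mul_assoc]
    rw [integral_const_mul]
    rcases lt_or_ge p.1 p.2.natAbs with hp | hp
    · simp [hd0 p.1 p.2 hp]
    · rw [integral_Ylm_mul_conj_Ylm hp hlm, mul_ite, mul_one, mul_zero]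
  rw [flCoeff, integral_tsum_mul (fun p : ℕ × ℤ => (memLp_Ylm p.1 p.2).const_mul (d p))
    (memLp_conj_Ylm l m) (tsum_eLpNorm_mul_Ylm_ne_top hd)]
  simp_rw [termwise]
  exact tsum_ite_eq _ _

end SquareIntegrableSeries

section LongitudinalDerivative

lemma integral_deriv_mul_of_eigenfunction {u v : ℝ → ℂ} {a b : ℝ} {c : ℂ}
    (hu : Differentiable ℝ u) (hv : ∀ x, HasDerivAt v (-c * v x) x) (hua : u b = u a)
    (hva : v b = v a) (h_int : IntervalIntegrable (fun x => deriv u x * v x) volume a b) :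
    ∫ x in a..b, deriv u x * v x = ∫ x in a..b, c * (u x * v x) := by
  have hv_cont : Continuous v := continuous_iff_continuousAt.mpr fun x => (hv x).continuousAt
  have hu_cont := hu.continuous
  have h_int' : IntervalIntegrable (fun x => c * (u x * v x)) volume a b :=
    Continuous.intervalIntegrable (by fun_prop) a b
  have product_rule (x : ℝ) : HasDerivAt (fun x => u x * v x)
      (deriv u x * v x - c * (u x * v x)) x :=
    ((hu x).hasDerivAt.mul (hv x)).congr_deriv (by ring)
  rw [← sub_eq_zero, ← intervalIntegral.integral_sub h_int h_int',
    intervalIntegral.integral_eq_sub_of_hasDerivAt (fun x _ => product_rule x) (h_int.sub h_int'),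
    hua, hva, sub_self]

lemma hasDerivAt_conj_Ylm (l : ℕ) (m : ℤ) (θ φ : ℝ) :
    HasDerivAt (fun x : ℝ => (starRingEnd ℂ) (Ylm l m θ x))
      (-(Complex.I * m) * (starRingEnd ℂ) (Ylm l m θ φ)) φ := by
  have linear : HasDerivAt (fun x : ℝ => Complex.I * m * (x : ℂ)) (Complex.I * m) φ := by
    simpa using (Complex.ofRealCLM.hasDerivAt (x := φ)).const_mul (Complex.I * m)
  refine ((linear.cexp.const_mul
    ((alphaY l m * assocLegendre l m.natAbs (sin θ) : ℝ) : ℂ)).star).congr_deriv ?_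
  simp only [Ylm, star_mul', RCLike.star_def, map_mul, Complex.conj_I, map_intCast]
  ring

lemma Ylm_pi_eq_Ylm_neg_pi (l : ℕ) (m : ℤ) (θ : ℝ) : Ylm l m θ π = Ylm l m θ (-π) := by
  rw [Ylm, Ylm, exp_int_mul_pi_eq]

lemma intervalIntegrable_of_integrable_longitudeMeasure {g : ℝ → ℂ}
    (hg : Integrable g longitudeMeasure) : IntervalIntegrable g volume (-π) π := by
  rw [intervalIntegrable_iff_integrableOn_Ioc_of_le (by linarith [pi_pos]),
    ← integrableOn_Icc_iff_integrableOn_Ioc, integrableOn_Icc_iff_integrableOn_Ico]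
  exact hg

variable {f : ℝ → ℝ → ℂ}

theorem flCoeff_deriv (hf : ∀ θ, Differentiable ℝ (f θ)) (hper : ∀ θ φ, f θ (φ + 2 * π) = f θ φ)
    (hfL : MemLp (fun p : ℝ × ℝ => f p.1 p.2) 2 sphereMeasure)
    (hfL' : MemLp (fun p : ℝ × ℝ => deriv (f p.1) p.2) 2 sphereMeasure) (l : ℕ) (m : ℤ) :
    flCoeff (fun θ φ => deriv (f θ) φ) l m = Complex.I * m * flCoeff f l m := by
  have h_int' := hfL'.integrable_mul (memLp_conj_Ylm l m)
  have h_int := (hfL.integrable_mul (memLp_conj_Ylm l m)).const_mul (Complex.I * m)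
  rw [sphereMeasure_eq_prod] at h_int h_int'
  rw [flCoeff, flCoeff, ← integral_const_mul, sphereMeasure_eq_prod]
  refine (integral_prod _ h_int').trans (.trans ?_ (integral_prod _ h_int).symm)
  refine integral_congr_ae ?_
  filter_upwards [h_int'.prod_right_ae] with θ hθ
  have endpoints_eq : f θ π = f θ (-π) := by
    rw [← hper θ (-π)]
    congr 1
    ring
  rw [integral_longitudeMeasure, integral_longitudeMeasure]
  exact integral_deriv_mul_of_eigenfunction (hf θ) (hasDerivAt_conj_Ylm l m θ) endpoints_eq
    (congrArg (starRingEnd ℂ) (Ylm_pi_eq_Ylm_neg_pi l m θ))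
    (intervalIntegrable_of_integrable_longitudeMeasure hθ)

lemma norm_flCoeff_deriv_sq (hf : ∀ θ, Differentiable ℝ (f θ))
    (hper : ∀ θ φ, f θ (φ + 2 * π) = f θ φ)
    (hfL : MemLp (fun p : ℝ × ℝ => f p.1 p.2) 2 sphereMeasure)
    (hfL' : MemLp (fun p : ℝ × ℝ => deriv (f p.1) p.2) 2 sphereMeasure) (l : ℕ) (m : ℤ) :
    ‖flCoeff (fun θ φ => deriv (f θ) φ) l m‖ ^ 2 = (m.natAbs : ℝ) ^ 2 * ‖flCoeff f l m‖ ^ 2 := by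
  rw [flCoeff_deriv hf hper hfL hfL', norm_mul, norm_mul, Complex.norm_I, one_mul, mul_pow,
    Complex.norm_intCast, Nat.cast_natAbs, Int.cast_abs]

end LongitudinalDerivative

section SobolevNorms

lemma memHs_and_HsNorm_le_of_tsum_Ylm {σ B : ℝ} {d : ℕ × ℤ → ℂ} (hd : ∑' p, ‖d p‖ₑ ≠ ⊤)
    (hd0 : ∀ l m, l < m.natAbs → d (l, m) = 0) (hB : 0 ≤ B)
    (hdB : ∑' p : ℕ × ℤ, ENNReal.ofReal ((p.1 + 1) ^ (2 * σ)) * ‖d p‖ₑ ^ 2 ≤ ENNReal.ofReal B) :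
    MemHs σ (fun θ φ => ∑' p : ℕ × ℤ, d p * Ylm p.1 p.2 θ φ) ∧
      HsNorm σ (fun θ φ => ∑' p : ℕ × ℤ, d p * Ylm p.1 p.2 θ φ) ≤ √B := by
  have weighted_bound := summable_and_tsum_le_of_tsum_ofReal_le
    (F := fun p : ℕ × ℤ => ((p.1 : ℝ) + 1) ^ (2 * σ) * ‖d p‖ ^ 2) (fun p => by positivity) hB
    (by simpa only [ofReal_mul_norm_sq (show 0 ≤ ((_ : ℕ) + 1 : ℝ) ^ (2 * σ) by positivity)])
  simp only [MemHs, HsNorm, flCoeff_tsum_mul_Ylm hd hd0]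
  exact ⟨⟨memLp_tsum_mul_Ylm hd, weighted_bound.1⟩, Real.sqrt_le_sqrt weighted_bound.2⟩

lemma tsum_ofReal_mul_norm_flCoeff_sq {σ : ℝ} {ψ : ℝ → ℝ → ℂ} (hψ : MemHs σ ψ) :
    ∑' p : ℕ × ℤ, ENNReal.ofReal (((p.1 : ℝ) + 1) ^ (2 * σ) * ‖flCoeff ψ p.1 p.2‖ ^ 2) =
      ENNReal.ofReal (HsNorm σ ψ ^ 2) :=
  tsum_ofReal_eq_ofReal_sqrt_tsum_sq (fun p => by positivity) hψ.2

lemma tsum_ofReal_mul_norm_equatorCoeff_sq {σ : ℝ} {h : ℝ → ℂ} (hh : MemHsE σ h) :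
    ∑' m : ℤ, ENNReal.ofReal (((m.natAbs : ℝ) + 1) ^ (2 * σ) * ‖equatorCoeff h m‖ ^ 2) =
      ENNReal.ofReal (HsNormE σ h ^ 2) :=
  tsum_ofReal_eq_ofReal_sqrt_tsum_sq (fun m => by positivity) hh.2

lemma dataWeight_mul_norm_flCoeff_sq {f : ℝ → ℝ → ℂ} (hf : ∀ θ, Differentiable ℝ (f θ))
    (hper : ∀ θ φ, f θ (φ + 2 * π) = f θ φ)
    (hfL : MemLp (fun p : ℝ × ℝ => f p.1 p.2) 2 sphereMeasure)
    (hfL' : MemLp (fun p : ℝ × ℝ => deriv (f p.1) p.2) 2 sphereMeasure) (s : ℝ) (l : ℕ) (m : ℤ) :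
    dataWeight s m.natAbs (l + 1) * ‖flCoeff f l m‖ ^ 2 =
      ((l : ℝ) + 1) ^ (2 * s) * ‖flCoeff f l m‖ ^ 2 +
        ((l : ℝ) + 1) ^ (2 * max (s - 1 / 2) 0) *
          ‖flCoeff (fun θ φ => deriv (f θ) φ) l m‖ ^ 2 := by
  rw [norm_flCoeff_deriv_sq hf hper hfL hfL', dataWeight]
  ring

lemma totalEnergy_eq_ofReal {s : ℝ} {f : ℝ → ℝ → ℂ} {h : ℝ → ℂ}
    (hf : ∀ θ, Differentiable ℝ (f θ)) (hper : ∀ θ φ, f θ (φ + 2 * π) = f θ φ)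
    (hfs : MemHs s f) (hfs' : MemHs (max (s - 1 / 2) 0) (fun θ φ => deriv (f θ) φ))
    (hhs : MemHsE (s + 3 / 4) h) :
    totalEnergy s f h = ENNReal.ofReal (HsNorm s f ^ 2 +
      HsNorm (max (s - 1 / 2) 0) (fun θ φ => deriv (f θ) φ) ^ 2 + HsNormE (s + 3 / 4) h ^ 2) := by
  have sphere_energy : ∑' (m : ℤ) (n : ℕ), ENNReal.ofReal
      (dataWeight s m.natAbs (m.natAbs + n + 1)) * ‖flCoeff f (m.natAbs + n) m‖ₑ ^ 2 =
      ENNReal.ofReal (HsNorm s f ^ 2) +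
        ENNReal.ofReal (HsNorm (max (s - 1 / 2) 0) (fun θ φ => deriv (f θ) φ) ^ 2) := by
    rw [← tsum_ofReal_mul_norm_flCoeff_sq hfs, ← tsum_ofReal_mul_norm_flCoeff_sq hfs',
      ← ENNReal.tsum_add, tsum_nat_prod_int_eq fun l m hlm => by simp [flCoeff_of_lt _ hlm]]
    refine tsum_congr fun m => tsum_congr fun n => ?_
    rw [← ENNReal.ofReal_add (by positivity) (by positivity),
      ← dataWeight_mul_norm_flCoeff_sq hf hper hfs.1 hfs'.1,
      ofReal_mul_norm_sq (dataWeight_nonneg (by positivity)), Nat.cast_add]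
  rw [ENNReal.ofReal_add (by positivity) (by positivity),
    ENNReal.ofReal_add (by positivity) (by positivity), ← sphere_energy,
    ← tsum_ofReal_mul_norm_equatorCoeff_sq hhs, add_comm, ← ENNReal.tsum_add, totalEnergy]
  refine tsum_congr fun m => ?_
  rw [dataEnergy, ofReal_mul_norm_sq (by positivity)]

end SobolevNorms

/-- Lemma 3.2: fractional Sobolev estimate for the series solution.
For `s ≥ 0` there is `C > 0` such that if `f ∈ H^s(𝕊)` with `f_φ ∈ H^{(s-1/2)₊}(𝕊)`
and `h ∈ H^{s+3/4}(ℰ)`, then the trace of the series solution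
`v = Σ (b_l^m + c_l^m) r^{-l-1} Y_l^m` belongs to `H^{s+1}(𝕊)` and
`‖v‖_{H^{s+1}} ≤ C (‖f‖_{H^s} + ‖f_φ‖_{H^{(s-1/2)₊}} + ‖h‖_{H^{s+3/4}(ℰ)})`. -/
theorem series_solution_sobolev_estimate (s : ℝ) (hs : 0 ≤ s) :
    ∃ C > 0, ∀ (f : ℝ → ℝ → ℂ) (h : ℝ → ℂ),
      (∀ θ : ℝ, Differentiable ℝ (f θ)) →
      (∀ θ φ : ℝ, f θ (φ + 2 * Real.pi) = f θ φ) →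
      MemHs s f →
      MemHs (max (s - 1 / 2) 0) (fun θ φ => deriv (f θ) φ) →
      MemHsE (s + 3 / 4) h →
      MemHs (s + 1) (vTraceS f h) ∧
      HsNorm (s + 1) (vTraceS f h) ≤
        C * (HsNorm s f + HsNorm (max (s - 1 / 2) 0) (fun θ φ => deriv (f θ) φ) +
          HsNormE (s + 3 / 4) h) := by
  obtain ⟨K, hK⟩ := exists_tsum_rpow_mul_seriesCoeff_le hs
  refine ⟨√K + 1, by positivity, fun f h hf hper hfs hfs' hhs => ?_⟩
  have energy := totalEnergy_eq_ofReal hf hper hfs hfs' hhs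
  set X := HsNorm s f
  set Y := HsNorm (max (s - 1 / 2) 0) (fun θ φ => deriv (f θ) φ)
  set Z := HsNormE (s + 3 / 4) h
  obtain ⟨hX, hY, hZ⟩ : 0 ≤ X ∧ 0 ≤ Y ∧ 0 ≤ Z := by
    refine ⟨?_, ?_, ?_⟩ <;> exact Real.sqrt_nonneg _
  have coeff_bound := hK f h
  rw [energy, ← ENNReal.ofReal_coe_nnreal, ← ENNReal.ofReal_mul K.coe_nonneg] at coeff_bound
  obtain ⟨hmem, hnorm⟩ := memHs_and_HsNorm_le_of_tsum_Ylm
    (tsum_enorm_seriesCoeff_ne_top hs (energy ▸ ENNReal.ofReal_ne_top))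
    (fun _ _ => seriesCoeff_of_lt f h) (by positivity) coeff_bound
  refine ⟨hmem, hnorm.trans ?_⟩
  rw [Real.sqrt_mul K.coe_nonneg]
  refine mul_le_mul (le_add_of_nonneg_right zero_le_one) ?_ (Real.sqrt_nonneg _) (by positivity)
  exact Real.sqrt_le_iff.mpr ⟨by positivity,
    by nlinarith [mul_nonneg hX hY, mul_nonneg hX hZ, mul_nonneg hY hZ]⟩

end
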